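/- Let q ∈ ℂ with 0 < |q| < 1, and let α, β, γ, x, y, z ∈ ℂ with β ≠ 0, γ ≠ 0, x ≠ 0, max(|x|, |y|, |αβ/γ|) < min(1, 1/|z|), with αβ ≠ q^n and γ ≠ q^n for all integers n ≥ 1, and such that none of x, y, x/β, β/x, xz, yz, αβz/γ, αβ, βyz, qβ/x, αx, xyz, qx/β equals q^{−n} for any integer n ≥ 0. Then ∑_{j,k,m ≥ 0} (α;q)_j (β;q)_k (q/γ;q)_m (γ;q)_{j+k−m} / ((q;q)_j (q;q)_k (q;q)_m (αβ;q)_{j+k−m}) · x^j y^k z^m converges absolutely and equals [(γx/β;q)_∞ (qz/γ;q)_∞ (αxz/γ;q)_∞ (βyz;q)_∞ / ((x/β;q)_∞ (αβz/γ;q)_∞ (xz;q)_∞ (yz;q)_∞)] · ₄φ₃[β, γ, αβz/γ, βy/x; αβ, βyz, qβ/x; q, q] + [(qz/γ;q)_∞ (β;q)_∞ (γ;q)_∞ (βy/x;q)_∞ (αx;q)_∞ (xyz;q)_∞ / ((x;q)_∞ (y;q)_∞ (xz;q)_∞ (yz;q)_∞ (αβ;q)_∞ (β/x;q)_∞)]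 · ₄φ₃[x, y, γx/β, αxz/γ; αx, xyz, qx/β; q, q]. -/

import Mathlib

open Finset

/-- The `q`-shifted factorial `(a;q)_n` for an arbitrary integer `n`. -/
noncomputable def qpoch (q a : ℂ) (n : ℤ) : ℂ :=
  if 0 ≤ n then ∏ i ∈ Finset.range n.toNat, (1 - a * q ^ (i : ℤ))
  else (∏ i ∈ Finset.range (-n).toNat, (1 - a * q ^ (n + (i : ℤ))))⁻¹

/-- The infinite `q`-shifted factorial `(a;q)_∞`. -/
noncomputable def qinf (q a : ℂ) : ℂ := ∏' i : ℕ, (1 - a * q ^ i)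

/-- The balanced basic hypergeometric series `₄φ₃[a₁,a₂,a₃,a₄; b₁,b₂,b₃; q, u]`. -/
noncomputable def Phi43 (q a1 a2 a3 a4 b1 b2 b3 u : ℂ) : ℂ :=
  ∑' ℓ : ℕ,
    (qpoch q a1 (ℓ : ℤ) * qpoch q a2 (ℓ : ℤ) * qpoch q a3 (ℓ : ℤ) * qpoch q a4 (ℓ : ℤ)) /
      (qpoch q q (ℓ : ℤ) * qpoch q b1 (ℓ : ℤ) * qpoch q b2 (ℓ : ℤ) * qpoch q b3 (ℓ : ℤ)) *
      u ^ ℓ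
/-- General term of the `q`-analogue of the Gelfand–Graev–Retakh triple series. -/
noncomputable def qGGRTerm (q α β γ x y z : ℂ) : ℕ × ℕ × ℕ → ℂ := fun p =>
  qpoch q α (p.1 : ℤ) * qpoch q β (p.2.1 : ℤ) * qpoch q (q / γ) (p.2.2 : ℤ) *
      qpoch q γ ((p.1 : ℤ) + (p.2.1 : ℤ) - (p.2.2 : ℤ)) /
    (qpoch q q (p.1 : ℤ) * qpoch q q (p.2.1 : ℤ) * qpoch q q (p.2.2 : ℤ) *
      qpoch q (α * β) ((p.1 : ℤ) + (p.2.1 : ℤ) - (p.2.2 : ℤ))) *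
    x ^ p.1 * y ^ p.2.1 * z ^ p.2.2

open Filter Topology


/-- natural-index q-shifted factorial -/
noncomputable def qp (q a : ℂ) (n : ℕ) : ℂ := ∏ i ∈ Finset.range n, (1 - a * q ^ i)

lemma qp_zero (q a : ℂ) : qp q a 0 = 1 := by simp [qp]
lemma qp_succ (q a : ℂ) (n : ℕ) : qp q a (n+1) = qp q a n * (1 - a * q ^ n) := by
  simp [qp, Finset.prod_range_succ]
lemma qp_succ' (q a : ℂ) (n : ℕ) : qp q a (n+1) = (1 - a) * qp q (a*q) n := by
  simp only [qp, Finset.prod_range_succ']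
  rw [mul_comm]; congr 1
  · simp
  · apply Finset.prod_congr rfl; intro i _; ring
lemma qpoch_nat (q a : ℂ) (n : ℕ) : qpoch q a (n : ℤ) = qp q a n := by
  simp [qpoch, qp]

lemma qp_ne_zero {q a : ℂ} (h : ∀ n : ℕ, a * q ^ n ≠ 1) (n : ℕ) : qp q a n ≠ 0 := by
  rw [qp, Finset.prod_ne_zero_iff]
  intro i _ h0
  exact h i (sub_eq_zero.mp h0).symm

lemma summable_qpow {q : ℂ} (hq1 : ‖q‖ < 1) (a : ℂ) : Summable (fun i : ℕ => ‖-(a * q ^ i)‖) := by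
  simp only [norm_neg, norm_mul, norm_pow]
  exact (summable_geometric_of_lt_one (norm_nonneg _) hq1).mul_left _

lemma qinf_mult {q : ℂ} (hq1 : ‖q‖ < 1) (a : ℂ) : Multipliable (fun i : ℕ => 1 - a * q ^ i) := by
  have := multipliable_one_add_of_summable (summable_qpow hq1 a)
  simpa [sub_eq_add_neg] using this

lemma qp_tendsto {q : ℂ} (hq1 : ‖q‖ < 1) (a : ℂ) : Tendsto (qp q a) atTop (𝓝 (qinf q a)) :=
  (qinf_mult hq1 a).tendsto_prod_tprod_nat

lemma qinf_ne_zero {q a : ℂ} (hq1 : ‖q‖ < 1) (h : ∀ n : ℕ, a * q ^ n ≠ 1) : qinf q a ≠ 0 := by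
  have := tprod_one_add_ne_zero_of_summable (f := fun i : ℕ => -(a * q ^ i)) ?_ (summable_qpow hq1 a)
  · simpa [sub_eq_add_neg, qinf] using this
  · intro i h0
    apply h i
    linear_combination -h0

lemma qinf_ne_zero' {q a : ℂ} (hq1 : ‖q‖ < 1) (ha : ‖a‖ < 1) : qinf q a ≠ 0 := by
  apply qinf_ne_zero hq1
  intro n h
  have h1 : ‖a * q^n‖ < 1 := by
    rw [norm_mul, norm_pow]
    calc ‖a‖ * ‖q‖^n ≤ ‖a‖ * 1 := by gcongr; exact pow_le_one₀ (norm_nonneg _) hq1.le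
      _ < 1 := by simpa
  rw [h] at h1; simp at h1

lemma qinf_step {q : ℂ} (hq1 : ‖q‖ < 1) (a : ℂ) : qinf q a = (1 - a) * qinf q (a * q) := by
  have h1 := (qp_tendsto hq1 a).comp (tendsto_add_atTop_nat 1)
  have h2 := (qp_tendsto hq1 (a*q)).const_mul (1-a)
  refine tendsto_nhds_unique h1 (h2.congr ?_)
  intro n; simp [qp_succ']

lemma qinf_split {q : ℂ} (hq1 : ‖q‖ < 1) (a : ℂ) (n : ℕ) :
    qinf q a = qp q a n * qinf q (a * q ^ n) := by
  induction n with
  | zero => simp [qp_zero]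
  | succ n ih => rw [ih, qinf_step hq1 (a * q^n), qp_succ]; ring_nf

lemma qinf_zero (q : ℂ) : qinf q 0 = 1 := by simp [qinf]

lemma qinf_one {q : ℂ} (hq1 : ‖q‖ < 1) : qinf q 1 = 0 := by rw [qinf_step hq1]; simp

lemma qp_bound {q : ℂ} (hq1 : ‖q‖ < 1) {a : ℂ} {R : ℝ} (ha : ‖a‖ ≤ R) (n : ℕ) :
    ‖qp q a n‖ ≤ Real.exp (R / (1 - ‖q‖)) := by
  rw [qp, norm_prod]
  have hR : 0 ≤ R := (norm_nonneg _).trans ha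
  calc ∏ i ∈ Finset.range n, ‖1 - a * q ^ i‖ ≤ ∏ i ∈ Finset.range n, Real.exp (R * ‖q‖^i) := by
        apply Finset.prod_le_prod
        · intros; positivity
        · intro i _
          calc ‖1 - a * q ^ i‖ ≤ ‖(1:ℂ)‖ + ‖a * q ^ i‖ := norm_sub_le _ _
            _ ≤ R * ‖q‖^i + 1 := by
              rw [norm_mul, norm_pow, norm_one, add_comm]; gcongr
            _ ≤ _ := Real.add_one_le_exp _
    _ = Real.exp (R * ∑ i ∈ Finset.range n, ‖q‖^i) := by
        rw [← Real.exp_sum, Finset.mul_sum]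
    _ ≤ _ := by
        rw [Real.exp_le_exp, div_eq_mul_inv]
        gcongr
        rw [← tsum_geometric_of_lt_one (norm_nonneg _) hq1]
        exact (summable_geometric_of_lt_one (norm_nonneg _) hq1).sum_le_tsum _ (by intros; positivity)

lemma qinf_bound {q : ℂ} (hq1 : ‖q‖ < 1) {a : ℂ} {R : ℝ} (ha : ‖a‖ ≤ R) :
    ‖qinf q a‖ ≤ Real.exp (R / (1 - ‖q‖)) :=
  le_of_tendsto (qp_tendsto hq1 a).norm (Eventually.of_forall (qp_bound hq1 ha))

lemma qp_inv_bound {q a : ℂ} (hq1 : ‖q‖ < 1) (h : ∀ n : ℕ, a * q ^ n ≠ 1) :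
    ∃ C, 0 < C ∧ ∀ n, ‖(qp q a n)⁻¹‖ ≤ C := by
  have h1 := ((qp_tendsto hq1 a).inv₀ (qinf_ne_zero hq1 h))
  obtain ⟨C, hC⟩ := (Metric.isBounded_range_of_tendsto _ h1).exists_norm_le
  refine ⟨max C 1, by positivity, fun n => (hC _ ⟨n, rfl⟩).trans (le_max_left _ _)⟩

lemma qinf_diff {q : ℂ} (hq1 : ‖q‖ < 1) : Differentiable ℂ (qinf q) := by
  intro a
  have hu : Summable (fun i : ℕ => (‖a‖+1) * ‖q‖^i) :=
    (summable_geometric_of_lt_one (norm_nonneg _) hq1).mul_left _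
  have h := hu.hasProdLocallyUniformlyOn_nat_one_add (K := Metric.ball (0:ℂ) (‖a‖+1))
    (f := fun (i : ℕ) (w : ℂ) => -(w * q^i)) Metric.isOpen_ball
    (Eventually.of_forall (fun i w hw => by
      rw [norm_neg, norm_mul, norm_pow]
      gcongr
      exact (mem_ball_zero_iff.mp hw).le)) (fun i => by fun_prop)
  have h2 : DifferentiableOn ℂ (fun w => ∏' i : ℕ, (1 + -(w * q^i))) (Metric.ball (0:ℂ) (‖a‖+1)) := by
    refine TendstoLocallyUniformlyOn.differentiableOn h ?_ Metric.isOpen_ball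
    refine Eventually.of_forall fun s => ?_
    fun_prop
  have h3 : DifferentiableOn ℂ (qinf q) (Metric.ball (0:ℂ) (‖a‖+1)) := by
    refine h2.congr fun w _ => ?_
    simp [qinf, sub_eq_add_neg]
  exact h3.differentiableAt (Metric.isOpen_ball.mem_nhds (by simp))

lemma qp_diff (q : ℂ) (n : ℕ) : Differentiable ℂ (fun a => qp q a n) := by
  unfold qp; fun_prop

lemma q_ne_one {q : ℂ} (hq1 : ‖q‖ < 1) (n : ℕ) : q * q ^ n ≠ 1 := by
  intro h
  have h1 : ‖q * q^n‖ < 1 := by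
    rw [norm_mul, norm_pow]
    calc ‖q‖ * ‖q‖^n ≤ ‖q‖ * 1 := by gcongr; exact pow_le_one₀ (norm_nonneg _) hq1.le
      _ < 1 := by simpa
  rw [h] at h1; simp at h1

lemma qpqq_ne {q : ℂ} (hq1 : ‖q‖ < 1) (n : ℕ) : qp q q n ≠ 0 := qp_ne_zero (q_ne_one hq1) n

lemma one_sub_q_ne {q : ℂ} (hq1 : ‖q‖ < 1) (n : ℕ) : 1 - q^(n+1) ≠ 0 := by
  have := q_ne_one hq1 n
  intro h; apply this; rw [← pow_succ']; linear_combination -h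


/-- coefficients of `(aw;q)_∞/(xw;q)_∞` -/
noncomputable def bcf (q a x : ℂ) (n : ℕ) : ℂ := (∏ i ∈ Finset.range n, (x - a * q ^ i)) / qp q q n

/-- formal power series of `(aw;q)_∞/(xw;q)_∞` -/
noncomputable def BB (q a x : ℂ) : PowerSeries ℂ := PowerSeries.mk (bcf q a x)

lemma bcf_zero (q a x : ℂ) : bcf q a x 0 = 1 := by simp [bcf, qp_zero]

lemma bcf_succ {q : ℂ} (hq1 : ‖q‖ < 1) (a x : ℂ) (n : ℕ) :
    (1 - q^(n+1)) * bcf q a x (n+1) = (x - a * q^n) * bcf q a x n := by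
  have h1 := qpqq_ne hq1 n
  have h2 := one_sub_q_ne hq1 n
  unfold bcf
  rw [qp_succ, Finset.prod_range_succ, pow_succ']
  have : 1 - q * q^n ≠ 0 := by rwa [← pow_succ']
  field_simp

open PowerSeries in
lemma coeff_one_sub (x : ℂ) (F : PowerSeries ℂ) (n : ℕ) :
    coeff (n+1) ((1 - C x * X) * F) = coeff (n+1) F - x * coeff n F := by
  rw [sub_mul, one_mul, map_sub, mul_assoc, coeff_C_mul, coeff_succ_X_mul]

open PowerSeries in
lemma coeff_one_sub_zero (x : ℂ) (F : PowerSeries ℂ) :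
    coeff 0 ((1 - C x * X) * F) = coeff 0 F := by
  rw [sub_mul, one_mul, map_sub, mul_assoc, coeff_C_mul, coeff_zero_X_mul]; simp

open PowerSeries in
lemma BB_func {q : ℂ} (hq1 : ‖q‖ < 1) (a x : ℂ) :
    (1 - C x * X) * BB q a x = (1 - C a * X) * rescale q (BB q a x) := by
  ext n
  cases n with
  | zero => rw [coeff_one_sub_zero, coeff_one_sub_zero]; simp
  | succ n =>
    rw [coeff_one_sub, coeff_one_sub, coeff_rescale, coeff_rescale]
    simp only [BB, coeff_mk]
    linear_combination bcf_succ hq1 a x n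

open PowerSeries in
lemma BB_shift {q : ℂ} (hq1 : ‖q‖ < 1) (a x : ℂ) :
    (1 - C a * X) * BB q (a*q) x = BB q a x := by
  ext n
  cases n with
  | zero => rw [coeff_one_sub_zero]; simp [BB, bcf_zero]
  | succ n =>
    rw [coeff_one_sub]
    simp only [BB, coeff_mk]
    have h1 := qpqq_ne hq1 n
    have h2 := one_sub_q_ne hq1 n
    unfold bcf
    have h3 : ∏ i ∈ Finset.range (n+1), (x - a * q ^ i) =
      (∏ i ∈ Finset.range n, (x - a * q * q ^ i)) * (x - a) := by
      rw [Finset.prod_range_succ']; simp [pow_succ', mul_assoc]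
    rw [h3, Finset.prod_range_succ, qp_succ]
    have : 1 - q * q^n ≠ 0 := by rwa [← pow_succ']
    field_simp
    ring

open PowerSeries in
lemma BB_rescale (q a x t : ℂ) : rescale t (BB q a x) = BB q (t*a) (t*x) := by
  ext n
  simp only [coeff_rescale, BB, coeff_mk, bcf]
  rw [mul_div_assoc']
  congr 1
  rw [← Finset.card_range n, ← Finset.prod_const, Finset.card_range, ← Finset.prod_mul_distrib]
  apply Finset.prod_congr rfl; intros; ring

open PowerSeries in
lemma func_unique {q : ℂ} (hq1 : ‖q‖ < 1) (x a y : ℂ) (F : PowerSeries ℂ)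
    (h0 : coeff 0 F = 0) (h : (1 - C x * X) * ((1 - C y * X) * F) = (1 - C a * X) * rescale q F) :
    F = 0 := by
  have key : ∀ n, coeff n F = 0 ∧ coeff (n+1) F = 0 := by
    intro n
    induction n with
    | zero =>
      refine ⟨h0, ?_⟩
      have := congrArg (coeff 1) h
      rw [show (1:ℕ) = 0+1 from rfl, coeff_one_sub, coeff_one_sub, coeff_one_sub,
        coeff_one_sub_zero, coeff_rescale, coeff_rescale, h0] at this
      have h2 := one_sub_q_ne hq1 0
      have : (1 - q^(0+1)) * coeff (0+1) F = 0 := by linear_combination this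
      exact (mul_eq_zero.mp this).resolve_left h2
    | succ n ih =>
      refine ⟨ih.2, ?_⟩
      have := congrArg (coeff (n+1+1)) h
      rw [coeff_one_sub, coeff_one_sub, coeff_one_sub,
        coeff_one_sub, coeff_rescale, coeff_rescale, ih.1, ih.2] at this
      have h2 := one_sub_q_ne hq1 (n+1)
      have : (1 - q^(n+1+1)) * coeff (n+1+1) F = 0 := by linear_combination this
      exact (mul_eq_zero.mp this).resolve_left h2
  ext n; simpa using (key n).1

open PowerSeries in
lemma BB_split {q : ℂ} (hq1 : ‖q‖ < 1) (a x : ℂ) : BB q a x = BB q a 0 * BB q 0 x := by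
  rw [← sub_eq_zero]
  apply func_unique hq1 x a 0
  · simp [BB, bcf_zero]
  · have h1 := BB_func hq1 a x
    have h2 := BB_func hq1 a 0
    have h3 := BB_func hq1 0 x
    simp only [map_zero, zero_mul, sub_zero, one_mul] at h2 h3 ⊢
    rw [map_sub, map_mul]
    linear_combination h1 - BB q a 0 * h3 - rescale q (BB q 0 x) * h2

/-- the series `(Aw)(Bw)/((xw)(yw))` -/
noncomputable def GG (q x y A B : ℂ) : PowerSeries ℂ := BB q A x * BB q B y

/-- coefficients of `(Aw)(Bw)/((xw)(yw))` -/
noncomputable def PP (q x y A B : ℂ) (n : ℕ) : ℂ := PowerSeries.coeff n (GG q x y A B)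

lemma PP_eq_sum (q x y A B : ℂ) (n : ℕ) :
    PP q x y A B n = ∑ p ∈ HasAntidiagonal.antidiagonal n, bcf q A x p.1 * bcf q B y p.2 := by
  simp [PP, GG, PowerSeries.coeff_mul, BB]

lemma PP_zero (q x y A B : ℂ) : PP q x y A B 0 = 1 := by
  simp [PP_eq_sum, bcf_zero]

lemma GG_swap {q : ℂ} (hq1 : ‖q‖ < 1) (x y A B : ℂ) : GG q x y A B = GG q x y B A := by
  unfold GG
  rw [BB_split hq1 A x, BB_split hq1 B y, BB_split hq1 A y, BB_split hq1 B x]; ring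

open PowerSeries in
lemma GG_func {q : ℂ} (hq1 : ‖q‖ < 1) (x y A B : ℂ) :
    (1 - C x * X) * (1 - C y * X) * GG q x y A B =
      (1 - C A * X) * (1 - C B * X) * rescale q (GG q x y A B) := by
  unfold GG
  rw [map_mul]
  linear_combination (1 - C y * X) * BB q B y * BB_func hq1 A x +
    (1 - C A * X) * rescale q (BB q A x) * BB_func hq1 B y

open PowerSeries in
lemma one_sub_ne (x : ℂ) : (1 - C x * X : PowerSeries ℂ) ≠ 0 := by
  intro h
  have := congrArg (coeff 0) h
  simp at this

open PowerSeries in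
lemma PP_recI {q : ℂ} (hq1 : ‖q‖ < 1) (x y A b : ℂ) (n : ℕ) :
    b * (1 - q^(n+1)) * PP q x y A (x*y*b) (n+1) =
      (1 - A*b*q^n) * PP q x y A (x*y*b) n -
        (1 - x*b) * (1 - y*b) * PP q x y A (x*y*(b*q)) n := by
  have h1 := GG_func hq1 x y A (x*y*b)
  have h2 : (1 - C (x*y*b) * X) * GG q x y A (x*y*(b*q)) = GG q x y A (x*y*b) := by
    have := BB_shift hq1 (x*y*b) y
    unfold GG
    rw [← this, show x*y*(b*q) = x*y*b*q by ring]; ring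
  set G := GG q x y A (x*y*b) with hG
  have key : C b * (G - rescale q G) = X * (G - C (A*b) * rescale q G) -
      X * (C ((1-x*b)*(1-y*b)) * GG q x y A (x*y*(b*q))) := by
    apply mul_left_cancel₀ (mul_ne_zero (one_sub_ne A) (one_sub_ne (x*y*b)))
    simp only [map_mul, map_sub, map_one] at h1 h2 ⊢
    linear_combination (C b - X * C A * C b) * h1 + X * ((1-C x*C b)*(1-C y*C b))*(1 - C A * X) * h2
  have := congrArg (coeff (n+1)) key
  rw [coeff_C_mul, map_sub, map_sub, coeff_succ_X_mul, coeff_succ_X_mul, coeff_rescale, map_sub,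
    coeff_C_mul, coeff_C_mul, coeff_rescale] at this
  simp only [PP]
  linear_combination this

open PowerSeries in
lemma PP_recII {q : ℂ} (hq1 : ‖q‖ < 1) (z γ δ : ℂ) (n : ℕ) :
    (1 - q^(n+1)) * PP q 1 z γ (δ*z) (n+1) =
      (z - γ*q^n) * PP q 1 z γ (δ*z) n +
        (1 - δ*z) * PP q 1 (q*z) γ (δ*(q*z)) n := by
  have h1 := GG_func hq1 1 z γ (δ*z)
  have h2 : (1 - C (δ*z) * X) * GG q 1 (q*z) γ (δ*(q*z)) = (1 - C z * X) * GG q 1 z γ (δ*z) := by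
    have := BB_func hq1 (δ*z) z
    rw [BB_rescale] at this
    unfold GG
    rw [show δ*(q*z) = q*(δ*z) by ring]
    linear_combination - BB q γ 1 * this
  set G := GG q 1 z γ (δ*z) with hG
  have key : (G - rescale q G) = X * (C z * G - C γ * rescale q G +
      C (1 - δ*z) * GG q 1 (q*z) γ (δ*(q*z))) := by
    apply mul_left_cancel₀ (mul_ne_zero (one_sub_ne γ) (one_sub_ne (δ*z)))
    simp only [map_mul, map_sub, map_one] at h1 h2 ⊢
    linear_combination (1 - X * C γ) * h1 - X * (1-C δ*C z)*(1 - C γ * X) * h2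
  have := congrArg (coeff (n+1)) key
  rw [map_sub, coeff_succ_X_mul, coeff_rescale, map_add, map_sub,
    coeff_C_mul, coeff_C_mul, coeff_C_mul, coeff_rescale] at this
  simp only [PP]
  linear_combination this


/-- majorant of `bcf` -/
noncomputable def mm (Q a X : ℝ) (n : ℕ) : ℝ := ∏ i ∈ Finset.range n, ((X + a * Q^i) / (1 - Q^(i+1)))

lemma mm_nonneg {Q a X : ℝ} (hQ : 0 ≤ Q) (hQ1 : Q < 1) (ha : 0 ≤ a) (hX : 0 ≤ X) (n : ℕ) :
    0 ≤ mm Q a X n := by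
  apply Finset.prod_nonneg
  intro i _
  have : Q^(i+1) ≤ 1 := pow_le_one₀ hQ hQ1.le
  have : 0 ≤ 1 - Q^(i+1) := by linarith
  positivity

lemma norm_bcf_le {q a x : ℂ} (hq1 : ‖q‖ < 1) {a' X' : ℝ} (ha : ‖a‖ ≤ a') (hx : ‖x‖ ≤ X') (n : ℕ) :
    ‖bcf q a x n‖ ≤ mm ‖q‖ a' X' n := by
  unfold bcf qp mm
  rw [← Finset.prod_div_distrib, norm_prod]
  apply Finset.prod_le_prod
  · intros; positivity
  · intro i _
    rw [norm_div]
    have h1 : ‖q‖^(i+1) < 1 := pow_lt_one₀ (norm_nonneg _) hq1 (by simp)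
    have ha0 := (norm_nonneg _).trans ha
    have hx0 := (norm_nonneg _).trans hx
    apply div_le_div₀
    · positivity
    · calc ‖x - a * q^i‖ ≤ ‖x‖ + ‖a * q^i‖ := norm_sub_le _ _
        _ ≤ _ := by rw [norm_mul, norm_pow]; gcongr
    · linarith
    · have := norm_sub_norm_le (1:ℂ) (q * q^i)
      rw [norm_one, ← pow_succ', norm_pow] at this
      rw [← pow_succ']; exact this

lemma mm_summable {Q a X r : ℝ} (hQ : 0 ≤ Q) (hQ1 : Q < 1) (ha : 0 ≤ a) (hX : 0 ≤ X) (hr : 0 ≤ r)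
    (hXr : X * r < 1) : Summable (fun n => mm Q a X n * r^n) := by
  have hlim : Tendsto (fun n : ℕ => (X + a * Q^n) / (1 - Q^(n+1)) * r) atTop
      (𝓝 ((X + a * 0) / (1 - 0) * r)) := by
    have h1 := tendsto_pow_atTop_nhds_zero_of_lt_one hQ hQ1
    have h2 := h1.comp (tendsto_add_atTop_nat 1)
    exact (((h1.const_mul a).const_add X).div (h2.const_sub 1) (by norm_num)).mul_const r
  obtain ⟨s, hs1, hs2⟩ := exists_between hXr
  have hev := hlim.eventually_lt_const (u := s) (by simpa using hs1)
  refine summable_of_ratio_norm_eventually_le hs2 ?_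
  filter_upwards [hev] with n hn
  have h0 := mm_nonneg hQ hQ1 ha hX n
  have h0' := mm_nonneg hQ hQ1 ha hX (n+1)
  rw [Real.norm_of_nonneg (by positivity), Real.norm_of_nonneg (by positivity)]
  have : mm Q a X (n+1) * r^(n+1) = ((X + a * Q^n) / (1 - Q^(n+1)) * r) * (mm Q a X n * r^n) := by
    rw [mm, Finset.prod_range_succ, ← mm]; ring
  rw [this]
  gcongr

lemma conv_summable {f g : ℕ → ℝ} (hf0 : ∀ n, 0 ≤ f n) (hg0 : ∀ n, 0 ≤ g n) {r : ℝ} (hr : 0 ≤ r)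
    (hf : Summable (fun n => f n * r^n)) (hg : Summable (fun n => g n * r^n)) :
    Summable (fun n => (∑ p ∈ HasAntidiagonal.antidiagonal n, f p.1 * g p.2) * r^n) := by
  have hf' : Summable (fun n => ‖f n * r^n‖) := hf.norm
  have hg' : Summable (fun n => ‖g n * r^n‖) := hg.norm
  have := (summable_norm_sum_mul_antidiagonal_of_summable_norm hf' hg').of_norm
  refine this.congr fun n => ?_
  rw [Finset.sum_mul]
  apply Finset.sum_congr rfl
  intro p hp
  rw [← HasAntidiagonal.mem_antidiagonal.mp hp, pow_add]; ring

/-- majorant of `PP` -/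
noncomputable def pm (Q x y A B : ℝ) (n : ℕ) : ℝ :=
  ∑ p ∈ HasAntidiagonal.antidiagonal n, mm Q A x p.1 * mm Q B y p.2

lemma pm_nonneg {Q x y A B : ℝ} (hQ : 0 ≤ Q) (hQ1 : Q < 1) (hx : 0 ≤ x) (hy : 0 ≤ y)
    (hA : 0 ≤ A) (hB : 0 ≤ B) (n : ℕ) : 0 ≤ pm Q x y A B n :=
  Finset.sum_nonneg fun _ _ => mul_nonneg (mm_nonneg hQ hQ1 hA hx _) (mm_nonneg hQ hQ1 hB hy _)

lemma norm_PP_le {q x y A B : ℂ} (hq1 : ‖q‖ < 1) {x' y' A' B' : ℝ} (hx : ‖x‖ ≤ x') (hy : ‖y‖ ≤ y')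
    (hA : ‖A‖ ≤ A') (hB : ‖B‖ ≤ B') (n : ℕ) : ‖PP q x y A B n‖ ≤ pm ‖q‖ x' y' A' B' n := by
  rw [PP_eq_sum]
  refine (norm_sum_le _ _).trans (Finset.sum_le_sum fun p _ => ?_)
  rw [norm_mul]
  exact mul_le_mul (norm_bcf_le hq1 hA hx _) (norm_bcf_le hq1 hB hy _) (norm_nonneg _)
    (mm_nonneg (norm_nonneg _) hq1 ((norm_nonneg _).trans hA) ((norm_nonneg _).trans hx) _)

lemma pm_summable {Q x y A B r : ℝ} (hQ : 0 ≤ Q) (hQ1 : Q < 1) (hx : 0 ≤ x) (hy : 0 ≤ y)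
    (hA : 0 ≤ A) (hB : 0 ≤ B) (hr : 0 ≤ r) (hxr : x * r < 1) (hyr : y * r < 1) :
    Summable (fun n => pm Q x y A B n * r^n) :=
  conv_summable (mm_nonneg hQ hQ1 hA hx) (mm_nonneg hQ hQ1 hB hy) hr
    (mm_summable hQ hQ1 hA hx hr hxr) (mm_summable hQ hQ1 hB hy hr hyr)

lemma exists_bound {f : ℕ → ℝ} {r : ℝ} (h : Summable (fun n => f n * r^n)) (hr : 0 < r) :
    ∃ C, 0 < C ∧ ∀ n, f n ≤ C * (r⁻¹)^n := by
  obtain ⟨C, hC⟩ := h.tendsto_atTop_zero.bddAbove_range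
  refine ⟨max C 1, by positivity, fun n => ?_⟩
  have := hC ⟨n, rfl⟩
  simp only at this
  rw [inv_pow, ← div_eq_mul_inv, le_div_iff₀ (by positivity)]
  exact this.trans (le_max_left _ _)

lemma bcf_norm_summable {q a x w : ℂ} (hq1 : ‖q‖ < 1) (h : ‖x * w‖ < 1) :
    Summable (fun n => ‖bcf q a x n * w^n‖) := by
  refine Summable.of_nonneg_of_le (fun _ => norm_nonneg _) (fun n => ?_)
    (mm_summable (Q := ‖q‖) (a := ‖a‖) (X := ‖x‖) (r := ‖w‖) (norm_nonneg _) hq1 (norm_nonneg _)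
      (norm_nonneg _) (norm_nonneg _) (by rwa [← norm_mul]))
  rw [norm_mul, norm_pow]
  gcongr
  exact norm_bcf_le hq1 le_rfl le_rfl n

lemma PP_norm_summable {q x y A B w : ℂ} (hq1 : ‖q‖ < 1) (h : ‖x * w‖ < 1) (h' : ‖y * w‖ < 1) :
    Summable (fun n => ‖PP q x y A B n * w^n‖) := by
  refine Summable.of_nonneg_of_le (fun _ => norm_nonneg _) (fun n => ?_)
    (pm_summable (Q := ‖q‖) (A := ‖A‖) (B := ‖B‖) (x := ‖x‖) (y := ‖y‖) (r := ‖w‖) (norm_nonneg _) hq1 (norm_nonneg _)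
      (norm_nonneg _) (norm_nonneg _) (norm_nonneg _) (norm_nonneg _) (by rwa [← norm_mul]) (by rwa [← norm_mul]))
  rw [norm_mul, norm_pow]
  gcongr
  exact norm_PP_le hq1 le_rfl le_rfl le_rfl le_rfl n

lemma norm_mul_q_lt {q u : ℂ} (hq1 : ‖q‖ < 1) (h : ‖u‖ < 1) (k : ℕ) : ‖u * q^k‖ < 1 := by
  rw [norm_mul, norm_pow]
  calc ‖u‖ * ‖q‖^k ≤ ‖u‖ * 1 := by gcongr; exact pow_le_one₀ (norm_nonneg _) hq1.le
    _ < 1 := by simpa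

lemma tendsto_tsum_pow {q : ℂ} (hq1 : ‖q‖ < 1) (c : ℕ → ℂ) (hc : Summable (fun n => ‖c n‖)) :
    Tendsto (fun k : ℕ => ∑' n, c n * (q^k)^n) atTop (𝓝 (c 0)) := by
  have h0 : c 0 = ∑' n, (if n = 0 then c 0 else 0) := by simp
  rw [h0]
  refine tendsto_tsum_of_dominated_convergence hc ?_ ?_
  · intro n
    by_cases hn : n = 0
    · subst hn; simp
    · simp only [hn, if_false]
      have : ‖q^n‖ < 1 := by rw [norm_pow]; exact pow_lt_one₀ (norm_nonneg _) hq1 hn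
      have := (tendsto_pow_atTop_nhds_zero_of_norm_lt_one this).const_mul (c n)
      rw [mul_zero] at this
      refine this.congr fun k => ?_
      rw [← pow_mul, ← pow_mul, mul_comm n k]
  · refine Eventually.of_forall fun k n => ?_
    rw [norm_mul, norm_pow, norm_pow]
    exact mul_le_of_le_one_right (norm_nonneg _) (pow_le_one₀ (by positivity) (pow_le_one₀ (norm_nonneg _) hq1.le))

/-- the q-binomial theorem -/
lemma qbinom {q a x w : ℂ} (hq1 : ‖q‖ < 1) (h : ‖x * w‖ < 1) :
    (∑' n, bcf q a x n * w^n) * qinf q (x*w) = qinf q (a*w) := by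
  have hstep : ∀ u : ℂ, ‖x * u‖ < 1 → (1 - x*u) * (∑' n, bcf q a x n * u^n) =
      (1 - a*u) * (∑' n, bcf q a x n * (u*q)^n) := by
    intro u hu
    have s1 := (bcf_norm_summable (a := a) hq1 hu).of_norm
    have s2 := (bcf_norm_summable (a := a) (w := u*q) hq1 (by
      have := norm_mul_q_lt hq1 hu 1; simpa [mul_assoc] using this)).of_norm
    have e1 := s1.tsum_eq_zero_add
    have e2 := s2.tsum_eq_zero_add
    have e3 : ∑' n, bcf q a x (n+1) * u^(n+1) - ∑' n, bcf q a x (n+1) * (u*q)^(n+1) =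
        x * u * (∑' n, bcf q a x n * u^n) - a * u * (∑' n, bcf q a x n * (u*q)^n) := by
      rw [← ((summable_nat_add_iff 1).mpr s1).tsum_sub ((summable_nat_add_iff 1).mpr s2),
        ← tsum_mul_left, ← tsum_mul_left, ← (s1.mul_left _).tsum_sub (s2.mul_left _)]
      apply tsum_congr; intro n
      have := bcf_succ hq1 a x n
      rw [mul_pow, mul_pow]
      linear_combination u^(n+1) * this
    simp only [bcf_zero, pow_zero] at e1 e2
    linear_combination e1 - e2 + e3
  have hk : ∀ k : ℕ, (∑' n, bcf q a x n * w^n) * qp q (x*w) k =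
      qp q (a*w) k * ∑' n, (bcf q a x n * w^n) * (q^k)^n := by
    intro k
    induction k with
    | zero => simp [qp_zero]
    | succ k ih =>
      rw [qp_succ, qp_succ, ← mul_assoc, ih]
      have := hstep (w * q^k) (by have := norm_mul_q_lt hq1 h k; simpa [mul_assoc] using this)
      have e : ∀ u : ℂ, (∑' n, (bcf q a x n * w^n) * u^n) = ∑' n, bcf q a x n * (w*u)^n := by
        intro u; apply tsum_congr; intro n; rw [mul_pow]; ring
      rw [e, e, pow_succ, ← mul_assoc w]
      linear_combination qp q (a*w) k * this
  have l1 := (qp_tendsto hq1 (x*w)).const_mul (∑' n, bcf q a x n * w^n)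
  have l2 := (qp_tendsto hq1 (a*w)).mul (tendsto_tsum_pow hq1 _ (bcf_norm_summable (a := a) hq1 h))
  have := tendsto_nhds_unique l1 (l2.congr fun k => (hk k).symm)
  simpa [bcf_zero] using this

lemma PP_eval {q x y A B w : ℂ} (hq1 : ‖q‖ < 1) (h : ‖x * w‖ < 1) (h' : ‖y * w‖ < 1) :
    (∑' n, PP q x y A B n * w^n) * (qinf q (x*w) * qinf q (y*w)) = qinf q (A*w) * qinf q (B*w) := by
  have s1 := bcf_norm_summable (a := A) hq1 h
  have s2 := bcf_norm_summable (a := B) hq1 h'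
  have := tsum_mul_tsum_eq_tsum_sum_antidiagonal_of_summable_norm s1 s2
  have e : ∑' n, PP q x y A B n * w^n =
      (∑' n, bcf q A x n * w^n) * (∑' n, bcf q B y n * w^n) := by
    rw [this]; apply tsum_congr; intro n
    rw [PP_eq_sum, Finset.sum_mul]
    apply Finset.sum_congr rfl
    intro p hp
    rw [← HasAntidiagonal.mem_antidiagonal.mp hp, pow_add]; ring
  rw [e, ← qbinom (a := A) hq1 h, ← qbinom (a := B) hq1 h']; ring


lemma qpoch_succ_int {q a : ℂ} (hq : q ≠ 0) (ha : ∀ n : ℕ, a ≠ q^(n+1)) (N : ℤ) :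
    qpoch q a (N+1) = qpoch q a N * (1 - a * q^N) := by
  rcases lt_or_ge N 0 with h | h
  · obtain ⟨m, rfl⟩ : ∃ m : ℕ, N = -((m:ℤ)+1) := ⟨(-N-1).toNat, by omega⟩
    have hne : 1 - a * q^(-((m:ℤ)+1)) ≠ 0 := by
      intro h0
      apply ha m
      rw [zpow_neg, sub_eq_zero] at h0
      have : q^((m:ℤ)+1) ≠ 0 := zpow_ne_zero _ hq
      field_simp at h0
      rw [← h0]; norm_cast
    have e1 : qpoch q a (-((m:ℤ)+1)) = (∏ i ∈ Finset.range (m+1), (1 - a * q ^ (-((m:ℤ)+1) + (i:ℤ))))⁻¹ := by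
      unfold qpoch
      rw [if_neg (by omega), show (-(-((m:ℤ)+1))).toNat = m+1 by omega]
    have e2 : qpoch q a (-((m:ℤ)+1)+1) = (∏ i ∈ Finset.range m, (1 - a * q ^ (-(m:ℤ) + (i:ℤ))))⁻¹ := by
      rw [show -((m:ℤ)+1)+1 = -(m:ℤ) by ring]
      unfold qpoch
      rcases Nat.eq_zero_or_pos m with h0 | h0
      · subst h0; simp
      · rw [if_neg (by omega), show (-(-(m:ℤ))).toNat = m by omega]
    rw [e1, e2, Finset.prod_range_succ', mul_inv]
    simp only [Nat.cast_zero, add_zero]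
    rw [mul_assoc, inv_mul_cancel₀ hne, mul_one]
    congr 1
    apply Finset.prod_congr rfl
    intro i _
    congr 3; push_cast; ring
  · obtain ⟨m, rfl⟩ := Int.eq_ofNat_of_zero_le h
    have := qpoch_nat q a (m+1)
    push_cast at this
    rw [this, qpoch_nat, qp_succ, zpow_natCast]

lemma qpoch_int_ne {q a : ℂ} (hq : q ≠ 0) (ha : ∀ n : ℕ, a ≠ q^(n+1)) (ha' : ∀ n : ℕ, a * q^n ≠ 1)
    (N : ℤ) : qpoch q a N ≠ 0 := by
  induction N using Int.induction_on with
  | zero => simp [qpoch]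
  | succ i ih =>
    have := qpoch_nat q a (i+1)
    push_cast at this
    rw [this]; exact qp_ne_zero ha' _
  | pred i ih =>
    intro h0
    have := qpoch_succ_int hq ha (-(i:ℤ) - 1)
    rw [h0, zero_mul, show -(i:ℤ) - 1 + 1 = -(i:ℤ) by ring] at this
    exact ih this

/-- `(γ)_N/(P)_N` -/
noncomputable def RR (q γ P : ℂ) (N : ℤ) : ℂ := qpoch q γ N / qpoch q P N

lemma RR_step {q γ P : ℂ} (hq : q ≠ 0) (hγ : ∀ n : ℕ, γ ≠ q^(n+1)) (hP : ∀ n : ℕ, P ≠ q^(n+1))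
    (hP' : ∀ n : ℕ, P * q^n ≠ 1) (N : ℤ) :
    RR q γ P (N+1) * (1 - P * q^N) = RR q γ P N * (1 - γ * q^N) := by
  have h1 := qpoch_succ_int hq hγ N
  have h2 := qpoch_succ_int hq hP N
  have h3 := qpoch_int_ne hq hP hP' N
  have h4 := qpoch_int_ne hq hP hP' (N+1)
  unfold RR
  rw [div_mul_eq_mul_div, div_mul_eq_mul_div, div_eq_div_iff h4 h3, h1, h2]; ring

lemma RR_neg {q γ P : ℂ} (hq : q ≠ 0) (hγ : ∀ n : ℕ, γ ≠ q^(n+1)) (hP : ∀ n : ℕ, P ≠ q^(n+1))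
    (hP' : ∀ n : ℕ, P * q^n ≠ 1) (m : ℕ) :
    RR q γ P (-((m+1:ℕ):ℤ)) * (q^(m+1) - γ) = RR q γ P (-(m:ℤ)) * (q^(m+1) - P) := by
  have h := RR_step hq hγ hP hP' (-((m+1:ℕ):ℤ))
  rw [show -((m+1:ℕ):ℤ) + 1 = -(m:ℤ) by push_cast; ring, zpow_neg, zpow_natCast] at h
  have : q^(m+1) ≠ 0 := pow_ne_zero _ hq
  field_simp at h
  linear_combination -h

lemma RR_bound {q γ P : ℂ} (hq1 : ‖q‖ < 1) (hq : q ≠ 0) (hγ0 : γ ≠ 0) (hγ : ∀ n : ℕ, γ ≠ q^(n+1))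
    (hP : ∀ n : ℕ, P ≠ q^(n+1)) (hP' : ∀ n : ℕ, P * q^n ≠ 1) {r : ℝ} (hr : ‖P/γ‖ < r) :
    ∃ C, 0 < C ∧ ∀ n m : ℕ, ‖RR q γ P ((n:ℤ) - m)‖ ≤ C * r^(m-n) := by
  have hr0 : 0 < r := (norm_nonneg _).trans_lt hr
  obtain ⟨C1, hC1, h1⟩ := qp_inv_bound hq1 hP'
  have hpos : ∀ n : ℕ, ‖RR q γ P (n:ℤ)‖ ≤ Real.exp (‖γ‖ / (1 - ‖q‖)) * C1 := by
    intro n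
    unfold RR
    rw [qpoch_nat, qpoch_nat, div_eq_mul_inv, norm_mul]
    exact mul_le_mul (qp_bound hq1 le_rfl n) (h1 n) (norm_nonneg _) (Real.exp_nonneg _)
  have hsum : Summable (fun m : ℕ => ‖RR q γ P (-(m:ℤ))‖ * (r⁻¹)^m) := by
    have hlim : Tendsto (fun m : ℕ => ‖(q^(m+1) - P) / (q^(m+1) - γ)‖ * r⁻¹) atTop
        (𝓝 (‖(0 - P)/(0-γ)‖ * r⁻¹)) := by
      have h1 := (tendsto_pow_atTop_nhds_zero_of_norm_lt_one hq1).comp (tendsto_add_atTop_nat 1)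
      exact ((h1.sub_const P).div (h1.sub_const γ) (by simpa using hγ0)).norm.mul_const _
    have hlt : ‖(0 - P)/(0-γ)‖ * r⁻¹ < 1 := by
      rw [zero_sub, zero_sub, neg_div_neg_eq, ← div_eq_mul_inv, div_lt_one hr0]; exact hr
    obtain ⟨s, hs1, hs2⟩ := exists_between hlt
    refine summable_of_ratio_norm_eventually_le hs2 ?_
    filter_upwards [hlim.eventually_lt_const hs1] with m hm
    rw [Real.norm_of_nonneg (by positivity), Real.norm_of_nonneg (by positivity)]
    have hne : q^(m+1) - γ ≠ 0 := sub_ne_zero.mpr (hγ m).symm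
    have e := RR_neg hq hγ hP hP' m
    rw [← eq_div_iff hne, mul_div_assoc] at e
    rw [e, norm_mul, pow_succ]
    calc ‖RR q γ P (-(m:ℤ))‖ * ‖(q^(m+1) - P) / (q^(m+1) - γ)‖ * (r⁻¹^m * r⁻¹)
        = (‖(q^(m+1) - P) / (q^(m+1) - γ)‖ * r⁻¹) * (‖RR q γ P (-(m:ℤ))‖ * r⁻¹^m) := by ring
      _ ≤ _ := by gcongr
  obtain ⟨C2, hC2, h2⟩ := exists_bound hsum (inv_pos.mpr hr0)
  rw [inv_inv] at h2
  refine ⟨max (Real.exp (‖γ‖ / (1 - ‖q‖)) * C1) C2, by positivity, fun n m => ?_⟩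
  rcases le_total m n with h | h
  · rw [show (n:ℤ) - m = ((n-m:ℕ):ℤ) by omega, Nat.sub_eq_zero_of_le h, pow_zero, mul_one]
    exact (hpos _).trans (le_max_left _ _)
  · rw [show (n:ℤ) - m = -((m-n:ℕ):ℤ) by omega]
    refine (h2 _).trans ?_
    gcongr
    exact le_max_right _ _

/-- inner sum -/
noncomputable def EE (q γ P z : ℂ) (n : ℕ) : ℂ := ∑' m : ℕ, bcf q (q/γ) 1 m * RR q γ P ((n:ℤ) - m) * z^m

lemma bcf_one_eq (q a : ℂ) (m : ℕ) : bcf q a 1 m = qp q a m / qp q q m := rfl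

lemma bcf_one_bound {q : ℂ} (hq1 : ‖q‖ < 1) (a : ℂ) : ∃ C, 0 < C ∧ ∀ n, ‖bcf q a 1 n‖ ≤ C := by
  obtain ⟨C1, hC1, h1⟩ := qp_inv_bound hq1 (q_ne_one hq1)
  refine ⟨Real.exp (‖a‖ / (1 - ‖q‖)) * C1, by positivity, fun n => ?_⟩
  rw [bcf_one_eq, div_eq_mul_inv, norm_mul]
  exact mul_le_mul (qp_bound hq1 le_rfl n) (h1 n) (norm_nonneg _) (Real.exp_nonneg _)

lemma bcf_scale (q α x : ℂ) (n : ℕ) : bcf q (α*x) x n = bcf q α 1 n * x^n := by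
  unfold bcf
  rw [div_mul_eq_mul_div]
  congr 1
  rw [← Finset.card_range n, ← Finset.prod_const, Finset.card_range, ← Finset.prod_mul_distrib]
  apply Finset.prod_congr rfl; intros; ring

section
variable {q γ P : ℂ} (hq1 : ‖q‖ < 1) (hq : q ≠ 0) (hγ0 : γ ≠ 0) (hγ : ∀ n : ℕ, γ ≠ q^(n+1))
    (hP : ∀ n : ℕ, P ≠ q^(n+1)) (hP' : ∀ n : ℕ, P * q^n ≠ 1)
include hq1 hq hγ0 hγ hP hP'

lemma EE_summable {z : ℂ} (hz : ‖P/γ*z‖ < 1) (n : ℕ) :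
    Summable (fun m : ℕ => bcf q (q/γ) 1 m * RR q γ P ((n:ℤ) - m) * z^m) := by
  obtain ⟨r, hr, hr2⟩ : ∃ r, ‖P/γ‖ < r ∧ r * ‖z‖ < 1 := by
    rw [norm_mul] at hz
    have hc : Tendsto (fun r : ℝ => r * ‖z‖) (𝓝[>] ‖P/γ‖) (𝓝 (‖P/γ‖*‖z‖)) :=
      ((continuous_id.mul continuous_const).tendsto _).mono_left nhdsWithin_le_nhds
    obtain ⟨r, h1, h2⟩ := ((hc.eventually_lt_const hz).and self_mem_nhdsWithin).exists
    exact ⟨r, h2, h1⟩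
  have hr0 : 0 < r := (norm_nonneg _).trans_lt hr
  obtain ⟨C1, hC1, h1⟩ := RR_bound hq1 hq hγ0 hγ hP hP' hr
  obtain ⟨C2, hC2, h2⟩ := bcf_one_bound hq1 (q/γ)
  rw [← summable_nat_add_iff n]
  have hg : Summable (fun m : ℕ => C2 * C1 * ‖z‖^n * (r*‖z‖)^m) :=
    (summable_geometric_of_lt_one (by positivity) hr2).mul_left _
  refine Summable.of_norm_bounded hg fun m => ?_
  rw [norm_mul, norm_mul, norm_pow]
  have h3 := h1 n (m+n)
  rw [Nat.add_sub_cancel] at h3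
  calc _ ≤ C2 * (C1 * r^m) * ‖z‖^(m+n) := by
        gcongr
        exact h2 _
    _ = _ := by rw [pow_add, mul_pow]; ring

lemma EE_zero {z : ℂ} (hz : ‖P/γ*z‖ < 1) :
    qinf q (P/γ*z) * EE q γ P z 0 = qinf q (q*z/γ) := by
  have hterm : ∀ m : ℕ, bcf q (q/γ) 1 m * RR q γ P (-(m:ℤ)) = bcf q q P m * (γ⁻¹)^m := by
    intro m
    induction m with
    | zero => simp [bcf_zero, RR, qpoch]
    | succ m ih =>
      have h1 := bcf_succ hq1 (q/γ) 1 m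
      have h2 := RR_neg hq hγ hP hP' m
      have h3 := bcf_succ hq1 q P m
      have hn1 := one_sub_q_ne hq1 m
      have hn2 : q^(m+1) - γ ≠ 0 := sub_ne_zero.mpr (hγ m).symm
      apply mul_left_cancel₀ hn1
      apply mul_left_cancel₀ hn2
      have e1 : (1 - q/γ*q^m) = -(q^(m+1)-γ) * γ⁻¹ := by field_simp; ring
      rw [e1] at h1
      rw [pow_succ γ⁻¹]
      linear_combination (q^(m+1)-γ) * RR q γ P (-((m+1:ℕ):ℤ)) * h1 
        + (-(q^(m+1)-γ)*γ⁻¹) * bcf q (q/γ) 1 m * h2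
        - (q^(m+1)-γ)*γ⁻¹ * (q^(m+1)-P) * ih  - (q^(m+1)-γ)*γ⁻¹^m*γ⁻¹ * h3
  have := qbinom (a := q) (x := P) (w := z/γ) hq1 (by rw [show P*(z/γ) = P/γ*z by ring]; exact hz)
  rw [show P*(z/γ) = P/γ*z by ring, show q*(z/γ) = q*z/γ by ring] at this
  rw [← this, mul_comm]
  congr 1
  unfold EE
  apply tsum_congr; intro m
  rw [Nat.cast_zero, zero_sub, hterm, div_pow, inv_pow]; ring

lemma EE_step {z : ℂ} (hz : ‖P/γ*z‖ < 1) (n : ℕ) :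
    EE q γ P z (n+1) * (1 - P*q^n) = (z - γ*q^n) * EE q γ P z n + (1 - q*z/γ) * EE q γ P (q*z) n := by
  have hqz : ‖P/γ*(q*z)‖ < 1 := by
    have := norm_mul_q_lt hq1 hz 1
    rwa [pow_one, show P/γ*z*q = P/γ*(q*z) by ring] at this
  have s1 := EE_summable hq1 hq hγ0 hγ hP hP' hz (n+1)
  have s1q := EE_summable hq1 hq hγ0 hγ hP hP' hqz (n+1)
  have s0 := EE_summable hq1 hq hγ0 hγ hP hP' hz n
  have s0q := EE_summable hq1 hq hγ0 hγ hP hP' hqz n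
  have r1 : EE q γ P z (n+1) - EE q γ P (q*z) (n+1) = z * EE q γ P z n - q*z/γ * EE q γ P (q*z) n := by
    unfold EE
    rw [← s1.tsum_sub s1q, (s1.sub s1q).tsum_eq_zero_add, ← tsum_mul_left, ← tsum_mul_left,
      ← (s0.mul_left _).tsum_sub (s0q.mul_left _)]
    simp only [pow_zero, sub_self, zero_add]
    apply tsum_congr; intro m
    have h1 := bcf_succ hq1 (q/γ) 1 m
    rw [show ((n+1:ℕ):ℤ) - ((m+1:ℕ):ℤ) = (n:ℤ) - m by push_cast; ring]
    rw [mul_pow, mul_pow]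
    linear_combination z^(m+1) * RR q γ P ((n:ℤ) - m) * h1
  have r2 : EE q γ P (q*z) (n+1) - P*q^n * EE q γ P z (n+1) =
      EE q γ P (q*z) n - γ * q^n * EE q γ P z n := by
    unfold EE
    rw [← tsum_mul_left, ← tsum_mul_left, ← s1q.tsum_sub (s1.mul_left _),
      ← s0q.tsum_sub (s0.mul_left _)]
    apply tsum_congr; intro m
    have h1 := RR_step hq hγ hP hP' ((n:ℤ) - m)
    rw [show ((n+1:ℕ):ℤ) - (m:ℤ) = (n:ℤ) - m + 1 by push_cast; ring, mul_pow]
    have h2 : q^n = q^m * q^((n:ℤ)-m) := by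
      rw [← zpow_natCast, ← zpow_natCast, ← zpow_add₀ hq]; congr 1; ring
    rw [h2]
    linear_combination bcf q (q/γ) 1 m * q^m * z^m * h1
  linear_combination r1 + r2

lemma EE_eval (n : ℕ) : ∀ z : ℂ, ‖P/γ*z‖ < 1 →
    qp q P n * qinf q (P/γ*z) * EE q γ P z n =
      qp q q n * qinf q (q*z/γ) * PP q 1 z γ (P/γ*z) n := by
  induction n with
  | zero =>
    intro z hz
    rw [qp_zero, qp_zero, PP_zero, one_mul, one_mul, mul_one]
    exact EE_zero hq1 hq hγ0 hγ hP hP' hz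
  | succ n ih =>
    intro z hz
    have hqz : ‖P/γ*(q*z)‖ < 1 := by
      have := norm_mul_q_lt hq1 hz 1
      rwa [pow_one, show P/γ*z*q = P/γ*(q*z) by ring] at this
    have i1 := ih z hz
    have i2 := ih (q*z) hqz
    have st := EE_step hq1 hq hγ0 hγ hP hP' hz n
    have rc := PP_recII hq1 z γ (P/γ) n
    have e1 := qinf_step hq1 (P/γ*z)
    have e2 := qinf_step hq1 (q*z/γ)
    rw [show P/γ*z*q = P/γ*(q*z) by ring] at e1
    rw [show q*z/γ*q = q*(q*z)/γ by ring] at e2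
    rw [qp_succ, qp_succ, show q*q^n = q^(n+1) by ring]
    linear_combination qp q P n * qinf q (P/γ*z) * st - qp q q n * qinf q (q*z/γ) * rc
      + (z - γ*q^n) * i1 + (1 - P/γ*z) * (1 - q*z/γ) * i2
      + (1 - q*z/γ) * qp q P n * EE q γ P (q*z) n * e1
      - (1 - P/γ*z) * qp q q n * PP q 1 (q*z) γ (P/γ*(q*z)) n * e2
end


lemma term_eq (q α β γ x y z : ℂ) (j k m : ℕ) : qGGRTerm q α β γ x y z (j,k,m) =
    (bcf q (α*x) x j * bcf q (β*y) y k) *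
      (bcf q (q/γ) 1 m * RR q γ (α*β) (((j+k:ℕ):ℤ) - m) * z^m) := by
  rw [bcf_scale, bcf_scale, bcf_one_eq, bcf_one_eq, bcf_one_eq]
  simp only [qGGRTerm, RR, qpoch_nat]
  push_cast
  simp only [div_eq_mul_inv, mul_inv]
  ring

lemma geom3_summable {u : ℝ} (h0 : 0 ≤ u) (h1 : u < 1) :
    Summable (fun p : ℕ × ℕ × ℕ => u^p.1 * (u^p.2.1 * u^p.2.2)) := by
  have h := summable_geometric_of_lt_one h0 h1
  have h2 : Summable (fun p : ℕ × ℕ => u^p.1 * u^p.2) :=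
    h.mul_of_nonneg h (fun _ => by positivity) (fun _ => by positivity)
  exact h.mul_of_nonneg h2 (fun _ => by positivity) (fun _ => by positivity)

lemma pow_max_bound {s w t : ℝ} (hs : 0 ≤ s) (hw : 0 ≤ w) (hst : s ≤ t) (hswt : s * w ≤ t) (ht : t ≤ 1)
    (n m : ℕ) : s^n * w^m * s^(m-n) ≤ (Real.sqrt t)^(n+m) := by
  have ht0 : 0 ≤ t := hs.trans hst
  have hu : t = (Real.sqrt t)^2 := (Real.sq_sqrt ht0).symm
  have hu1 : Real.sqrt t ≤ 1 := Real.sqrt_le_one.mpr ht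
  rcases le_total n m with h | h
  · calc s^n * w^m * s^(m-n) = (s*w)^m := by
          rw [mul_pow]; nth_rw 3 [← Nat.add_sub_of_le h]; rw [pow_add]; ring
      _ ≤ t^m := by gcongr
      _ = (Real.sqrt t)^(2*m) := by rw [pow_mul, ← hu]
      _ ≤ _ := pow_le_pow_of_le_one (Real.sqrt_nonneg _) hu1 (by omega)
  · rw [Nat.sub_eq_zero_of_le h, pow_zero, mul_one]
    calc s^n * w^m = s^(n-m) * (s*w)^m := by
          rw [mul_pow]; nth_rw 1 [← Nat.sub_add_cancel h]; rw [pow_add]; ring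
      _ ≤ t^(n-m) * t^m := by gcongr
      _ = t^n := by rw [← pow_add, Nat.sub_add_cancel h]
      _ = (Real.sqrt t)^(2*n) := by rw [pow_mul, ← hu]
      _ ≤ _ := pow_le_pow_of_le_one (Real.sqrt_nonneg _) hu1 (by omega)

lemma exists_s0 {M w : ℝ} (hM : M < 1) (hMw : M * w < 1) : ∃ s, M < s ∧ s < 1 ∧ s * w < 1 := by
  have hc : Tendsto (fun r : ℝ => r * w) (𝓝[>] M) (𝓝 (M*w)) :=
    ((continuous_id.mul continuous_const).tendsto _).mono_left nhdsWithin_le_nhds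
  have hc2 : Tendsto (fun r : ℝ => r) (𝓝[>] M) (𝓝 M) := tendsto_id.mono_left nhdsWithin_le_nhds
  obtain ⟨r, ⟨h1, h2⟩, h3⟩ := (((hc.eventually_lt_const hMw).and (hc2.eventually_lt_const hM)).and
    self_mem_nhdsWithin).exists
  exact ⟨r, h3, h2, h1⟩

lemma triple_summable {q α β γ x y z : ℂ} (hq1 : ‖q‖ < 1) (hq : q ≠ 0) (hγ0 : γ ≠ 0)
    (hγ : ∀ n : ℕ, γ ≠ q^(n+1)) (hP : ∀ n : ℕ, α*β ≠ q^(n+1)) (hP' : ∀ n : ℕ, α*β * q^n ≠ 1)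
    (hlt1 : max (max ‖x‖ ‖y‖) ‖α * β / γ‖ < 1)
    (hlt2 : max (max ‖x‖ ‖y‖) ‖α * β / γ‖ * ‖z‖ < 1) :
    Summable (fun p : ℕ × ℕ × ℕ => ‖qGGRTerm q α β γ x y z p‖) := by
  obtain ⟨s, hs, hs1, hsz⟩ := exists_s0 hlt1 hlt2
  have hxs : ‖x‖ ≤ s := ((le_max_left _ _).trans (le_max_left _ _)).trans hs.le
  have hys : ‖y‖ ≤ s := ((le_max_right _ _).trans (le_max_left _ _)).trans hs.le
  have hs0 : 0 ≤ s := (norm_nonneg _).trans hxs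
  obtain ⟨C1, hC1, h1⟩ := RR_bound hq1 hq hγ0 hγ hP hP' ((le_max_right _ _).trans_lt hs)
  obtain ⟨C2, hC2, h2⟩ := bcf_one_bound hq1 (q/γ)
  obtain ⟨C3, hC3, h3⟩ := bcf_one_bound hq1 α
  obtain ⟨C4, hC4, h4⟩ := bcf_one_bound hq1 β
  set t := max s (s*‖z‖) with ht
  have ht1 : t < 1 := max_lt hs1 hsz
  have ht0 : 0 ≤ t := hs0.trans (le_max_left _ _)
  have hu1 : Real.sqrt t < 1 := by
    rw [Real.sqrt_lt' one_pos]; simpa using ht1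
  refine Summable.of_nonneg_of_le (fun _ => norm_nonneg _) ?_
    ((geom3_summable (Real.sqrt_nonneg t) hu1).mul_left (C3*C4*C2*C1))
  rintro ⟨j, k, m⟩
  rw [term_eq, bcf_scale, bcf_scale]
  simp only [norm_mul, norm_pow]
  calc ‖bcf q α 1 j‖ * ‖x‖^j * (‖bcf q β 1 k‖ * ‖y‖^k) *
        (‖bcf q (q/γ) 1 m‖ * ‖RR q γ (α*β) (((j+k:ℕ):ℤ) - m)‖ * ‖z‖^m)
      ≤ C3 * s^j * (C4 * s^k) * (C2 * (C1 * s^(m-(j+k))) * ‖z‖^m) := by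
        gcongr
        · exact h3 j
        · exact h4 k
        · exact h2 m
        · exact h1 _ _
    _ = C3*C4*C2*C1 * (s^(j+k) * ‖z‖^m * s^(m-(j+k))) := by rw [pow_add]; ring
    _ ≤ C3*C4*C2*C1 * (Real.sqrt t)^(j+k+m) := by
        gcongr
        exact pow_max_bound hs0 (norm_nonneg _) (le_max_left _ _) (le_max_right _ _) ht1.le _ _
    _ = _ := by rw [pow_add, pow_add]; ring

lemma triple_tsum {q α β γ x y z : ℂ}
    (hs : Summable (fun p : ℕ × ℕ × ℕ => ‖qGGRTerm q α β γ x y z p‖)) :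
    ∑' p : ℕ × ℕ × ℕ, qGGRTerm q α β γ x y z p =
      ∑' n, PP q x y (α*x) (β*y) n * EE q γ (α*β) z n := by
  have hs1 := hs.of_norm
  have hs2 : Summable (fun p : (ℕ × ℕ) × ℕ => qGGRTerm q α β γ x y z (p.1.1, p.1.2, p.2)) :=
    ((Equiv.prodAssoc ℕ ℕ ℕ).summable_iff (f := qGGRTerm q α β γ x y z)).mpr hs1
  rw [← (Equiv.prodAssoc ℕ ℕ ℕ).tsum_eq (qGGRTerm q α β γ x y z)]
  have e1 : ∑' p : (ℕ × ℕ) × ℕ, qGGRTerm q α β γ x y z ((Equiv.prodAssoc ℕ ℕ ℕ) p) =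
      ∑' p : ℕ × ℕ, bcf q (α*x) x p.1 * bcf q (β*y) y p.2 * EE q γ (α*β) z (p.1+p.2) := by
    rw [Summable.tsum_prod (f := fun p : (ℕ × ℕ) × ℕ => qGGRTerm q α β γ x y z ((Equiv.prodAssoc ℕ ℕ ℕ) p)) hs2]
    apply tsum_congr; intro p
    unfold EE
    rw [← tsum_mul_left]
    apply tsum_congr; intro m
    exact term_eq _ _ _ _ _ _ _ _ _ _
  have hs3 : Summable (fun p : ℕ × ℕ => bcf q (α*x) x p.1 * bcf q (β*y) y p.2 * EE q γ (α*β) z (p.1+p.2)) := by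
    refine hs2.prod.congr fun p => ?_
    unfold EE
    rw [← tsum_mul_left]
    apply tsum_congr; intro m
    exact term_eq _ _ _ _ _ _ _ _ _ _
  rw [e1]
  have e3 := (HasAntidiagonal.sigmaAntidiagonalEquivProd (A := ℕ)).tsum_eq (fun p : ℕ × ℕ => bcf q (α*x) x p.1 * bcf q (β*y) y p.2 * EE q γ (α*β) z (p.1+p.2))
  refine e3.symm.trans ?_
  have hs4 := (HasAntidiagonal.sigmaAntidiagonalEquivProd (A := ℕ)).summable_iff.mpr hs3
  have e2 := hs4.tsum_sigma
  refine e2.trans ?_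
  apply tsum_congr; intro n
  rw [tsum_fintype, PP_eq_sum, Finset.sum_mul, ← Finset.sum_coe_sort (HasAntidiagonal.antidiagonal n)]
  apply Finset.sum_congr rfl
  rintro ⟨p, hp⟩ _
  simp only [Function.comp, HasAntidiagonal.sigmaAntidiagonalEquivProd_apply]
  rw [HasAntidiagonal.mem_antidiagonal.mp hp]

/-- `Ψ` -/
noncomputable def Psi (q x y A γ z b : ℂ) : ℂ :=
  ∑' n, qp q q n * qinf q (A*b*q^n) * PP q x y A (x*y*b) n * PP q 1 z γ (A*b*z/γ) n

lemma triple_eq_Psi {q α β γ x y z A b : ℂ} (hq1 : ‖q‖ < 1) (hq : q ≠ 0) (hγ0 : γ ≠ 0)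
    (hγ : ∀ n : ℕ, γ ≠ q^(n+1)) (hP : ∀ n : ℕ, α*β ≠ q^(n+1)) (hP' : ∀ n : ℕ, α*β * q^n ≠ 1)
    (hlt1 : max (max ‖x‖ ‖y‖) ‖α * β / γ‖ < 1)
    (hlt2 : max (max ‖x‖ ‖y‖) ‖α * β / γ‖ * ‖z‖ < 1) (hA : A = α*x) (hb : β = x*b) :
    (∑' p : ℕ × ℕ × ℕ, qGGRTerm q α β γ x y z p) * (qinf q (α*β/γ*z) * qinf q (α*β)) =
      qinf q (q*z/γ) * Psi q x y A γ z b := by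
  rw [triple_tsum (triple_summable hq1 hq hγ0 hγ hP hP' hlt1 hlt2)]
  unfold Psi
  rw [← tsum_mul_left, ← tsum_mul_right]
  apply tsum_congr; intro n
  have hz : ‖α*β/γ*z‖ < 1 := by
    rw [norm_mul]
    exact (mul_le_mul_of_nonneg_right (le_max_right _ _) (norm_nonneg _)).trans_lt hlt2
  have h := EE_eval hq1 hq hγ0 hγ hP hP' n z hz
  have e : A*b = α*β := by rw [hA, hb]; ring
  have e2 : x*y*b = β*y := by rw [hb]; ring
  have e3 : α*β*z/γ = α*β/γ*z := by ring
  rw [e, e2, e3, ← hA, qinf_split hq1 (α*β) n]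
  linear_combination qinf q (α*β*q^n) * PP q x y A (β*y) n * h


lemma PP_geom_bound {q x y A B : ℂ} (hq1 : ‖q‖ < 1) {r : ℝ} (hx : ‖x‖ < r) (hy : ‖y‖ < r) :
    ∃ C, 0 < C ∧ ∀ n, ‖PP q x y A B n‖ ≤ C * r^n := by
  have hr : 0 < r := (norm_nonneg _).trans_lt hx
  have h := pm_summable (Q := ‖q‖) (x := ‖x‖) (y := ‖y‖) (A := ‖A‖) (B := ‖B‖) (r := r⁻¹)
    (norm_nonneg _) hq1 (norm_nonneg _) (norm_nonneg _) (norm_nonneg _) (norm_nonneg _)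
    (inv_nonneg.mpr hr.le) (by rw [← div_eq_mul_inv, div_lt_one hr]; exact hx)
    (by rw [← div_eq_mul_inv, div_lt_one hr]; exact hy)
  obtain ⟨C, hC, h2⟩ := exists_bound h (inv_pos.mpr hr)
  rw [inv_inv] at h2
  exact ⟨C, hC, fun n => (norm_PP_le hq1 le_rfl le_rfl le_rfl le_rfl n).trans (h2 n)⟩

lemma exists_rad {a b w v : ℝ} (h1 : a * w < 1) (h2 : b * w < 1) (h3 : a * v < 1) (h4 : b * v < 1)
    (ha : a < 1) (hb : b < 1) : ∃ r, a < r ∧ b < r ∧ r * w < 1 ∧ r * v < 1 ∧ r < 1 := by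
  have hc : ∀ w : ℝ, a * w < 1 → b * w < 1 → ∀ᶠ r in 𝓝[>] (max a b), r * w < 1 := by
    intro w h1 h2
    have hc : Tendsto (fun r : ℝ => r * w) (𝓝[>] (max a b)) (𝓝 (max a b*w)) :=
      ((continuous_id.mul continuous_const).tendsto _).mono_left nhdsWithin_le_nhds
    refine hc.eventually_lt_const ?_
    rcases max_choice a b with h | h <;> rw [h] <;> assumption
  obtain ⟨r, ⟨⟨h5, h6⟩, h7⟩, h8⟩ := ((((hc w h1 h2).and (hc v h3 h4)).and (hc 1 (by simpa) (by simpa))).and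
    self_mem_nhdsWithin).exists
  exact ⟨r, (le_max_left _ _).trans_lt h8, (le_max_right _ _).trans_lt h8, h5, h6, by simpa using h7⟩

lemma qp_ratio_bound {q : ℂ} (hq1 : ‖q‖ < 1) :
    ∃ C, 0 < C ∧ ∀ n i, ‖qp q q n / qp q q i‖ ≤ C := by
  obtain ⟨C1, hC1, h1⟩ := qp_inv_bound hq1 (q_ne_one hq1)
  refine ⟨Real.exp (‖q‖ / (1 - ‖q‖)) * C1, by positivity, fun n i => ?_⟩
  rw [div_eq_mul_inv, norm_mul]
  exact mul_le_mul (qp_bound hq1 le_rfl n) (h1 i) (norm_nonneg _) (Real.exp_nonneg _)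

/-- the series `∑ (q)_{n+i}/(q)_i h_{n+i} b^i` -/
noncomputable def rho (q x y A : ℂ) (n : ℕ) (b : ℂ) : ℂ :=
  ∑' i, qp q q (n+i) / qp q q i * PP q x y A 0 (n+i) * b^i

lemma rho_summable {q x y A b : ℂ} (hq1 : ‖q‖ < 1) (h : ‖x * b‖ < 1) (h' : ‖y * b‖ < 1) (n : ℕ) :
    Summable (fun i => qp q q (n+i) / qp q q i * PP q x y A 0 (n+i) * b^i) := by
  rw [norm_mul] at h h'
  obtain ⟨r, hr1, hr2⟩ : ∃ r, max ‖x‖ ‖y‖ < r ∧ r * ‖b‖ < 1 := by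
    have hc : Tendsto (fun r : ℝ => r * ‖b‖) (𝓝[>] (max ‖x‖ ‖y‖)) (𝓝 (max ‖x‖ ‖y‖*‖b‖)) :=
      ((continuous_id.mul continuous_const).tendsto _).mono_left nhdsWithin_le_nhds
    have := hc.eventually_lt_const (u := 1) (by
      rcases max_choice ‖x‖ ‖y‖ with h | h <;> rw [h] <;> assumption)
    obtain ⟨r, h1, h2⟩ := (this.and self_mem_nhdsWithin).exists
    exact ⟨r, h2, h1⟩
  have hxr := (le_max_left _ _).trans_lt hr1
  have hyr := (le_max_right _ _).trans_lt hr1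
  have hr0 : 0 < r := (norm_nonneg _).trans_lt hxr
  obtain ⟨C1, hC1, h1⟩ := PP_geom_bound (A := A) (B := 0) hq1 hxr hyr
  obtain ⟨C2, hC2, h2⟩ := qp_ratio_bound hq1
  refine Summable.of_norm_bounded ((summable_geometric_of_lt_one (by positivity) hr2).mul_left (C2*C1*r^n)) fun i => ?_
  rw [norm_mul, norm_mul, norm_pow]
  calc _ ≤ C2 * (C1 * r^(n+i)) * ‖b‖^i := by
        gcongr
        · exact h2 _ _
        · exact h1 _
    _ = _ := by rw [pow_add, mul_pow]; ring

lemma rho_step {q x y A b : ℂ} (hq1 : ‖q‖ < 1) (h : ‖x * b‖ < 1) (h' : ‖y * b‖ < 1) (n : ℕ) :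
    rho q x y A n b - rho q x y A n (b*q) = b * rho q x y A (n+1) b := by
  have s1 := rho_summable (A := A) hq1 h h' n
  have s2 := rho_summable (A := A) (b := b*q) hq1 (by
    have := norm_mul_q_lt hq1 h 1; simpa [mul_assoc] using this) (by
    have := norm_mul_q_lt hq1 h' 1; simpa [mul_assoc] using this) n
  unfold rho
  rw [← s1.tsum_sub s2, (s1.sub s2).tsum_eq_zero_add, ← tsum_mul_left]
  simp only [pow_zero, sub_self, zero_add]
  apply tsum_congr; intro i
  have hn := one_sub_q_ne hq1 i
  have hi := qpqq_ne hq1 i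
  have e : qp q q (i+1) = qp q q i * (1 - q^(i+1)) := by rw [qp_succ]; ring
  rw [show n + 1 + i = n + (i+1) by ring, e, mul_pow]
  field_simp
  ring

lemma rho_eval {q x y A : ℂ} (hq1 : ‖q‖ < 1) (n : ℕ) : ∀ b : ℂ, ‖x * b‖ < 1 → ‖y * b‖ < 1 →
    qinf q (x*b) * qinf q (y*b) * rho q x y A n b =
      qinf q (A*b*q^n) * qp q q n * PP q x y A (x*y*b) n := by
  induction n with
  | zero =>
    intro b h h'
    have := PP_eval (A := A) (B := 0) hq1 h h'
    rw [zero_mul, qinf_zero] at this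
    rw [qp_zero, PP_zero, pow_zero, mul_one, mul_one, mul_one, ← this.trans (mul_one _), mul_comm]
    unfold rho
    congr 1
    apply tsum_congr; intro i
    rw [zero_add, div_self (qpqq_ne hq1 i), one_mul]
  | succ n ih =>
    intro b h h'
    by_cases hb : b = 0
    · subst hb
      simp only [mul_zero, zero_mul, qinf_zero, one_mul]
      unfold rho
      rw [tsum_eq_single 0]
      · simp [qp_zero]
      · intro i hi; simp [hi]
    · apply mul_left_cancel₀ hb
      have hq' : ‖x * (b*q)‖ < 1 := by
        have := norm_mul_q_lt hq1 h 1; simpa [mul_assoc] using this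
      have hq'' : ‖y * (b*q)‖ < 1 := by
        have := norm_mul_q_lt hq1 h' 1; simpa [mul_assoc] using this
      have st := rho_step (A := A) hq1 h h' n
      have i1 := ih b h h'
      have i2 := ih (b*q) hq' hq''
      have rc := PP_recI hq1 x y A b n
      have e1 := qinf_step hq1 (x*b)
      have e2 := qinf_step hq1 (y*b)
      have e3 := qinf_step hq1 (A*b*q^n)
      rw [mul_assoc x b q] at e1
      rw [mul_assoc y b q] at e2
      rw [show A*b*q^n*q = A*b*q^(n+1) by ring] at e3
      rw [show A*(b*q)*q^n = A*b*q^(n+1) by ring] at i2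
      have e4 : qp q q (n+1) = qp q q n * (1 - q^(n+1)) := by rw [qp_succ]; ring
      rw [e4]
      have e5 : b * (qinf q (x*b) * qinf q (y*b) * rho q x y A (n+1) b) =
        qinf q (x*b) * qinf q (y*b) * rho q x y A n b -
          (1-x*b)*(1-y*b) * (qinf q (x*(b*q)) * qinf q (y*(b*q)) * rho q x y A n (b*q)) := by
        rw [e1, e2]
        linear_combination -((1-x*b) * qinf q (x*(b*q)) * ((1-y*b)*qinf q (y*(b*q)))) * st
      rw [e5, i1, i2, e3]
      linear_combination -(qinf q (A*b*q^(n+1)) * qp q q n) * rc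

/-- the symmetric coefficient -/
noncomputable def DD (q A γ z b : ℂ) (N : ℕ) : ℂ :=
  PowerSeries.coeff N (GG q 1 z γ (A*b*z/γ) * BB q 0 b)

lemma DD_symm {q : ℂ} (hq1 : ‖q‖ < 1) (A γ z b : ℂ) (N : ℕ) : DD q A γ z b N = DD q A γ b z N := by
  unfold DD GG
  rw [BB_split hq1 (A*b*z/γ) z, BB_split hq1 (A*z*b/γ) b, show A*z*b/γ = A*b*z/γ by ring]
  refine congrArg (PowerSeries.coeff N) ?_
  ring

lemma DD_eq_sum (q A γ z b : ℂ) (N : ℕ) : DD q A γ z b N =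
    ∑ p ∈ HasAntidiagonal.antidiagonal N, PP q 1 z γ (A*b*z/γ) p.1 * (b^p.2 / qp q q p.2) := by
  simp [DD, PP, PowerSeries.coeff_mul, BB, bcf]

lemma Psi_eq {q x y A γ z b : ℂ} (hq1 : ‖q‖ < 1) (hx : ‖x‖ < 1) (hy : ‖y‖ < 1)
    (hxz : ‖x * z‖ < 1) (hyz : ‖y * z‖ < 1) (hxb : ‖x * b‖ < 1) (hyb : ‖y * b‖ < 1) :
    Psi q x y A γ z b = qinf q (x*b) * qinf q (y*b) *
      ∑' N, qp q q N * PP q x y A 0 N * DD q A γ z b N := by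
  have hxz' := hxz
  have hyz' := hyz
  have hxb' := hxb
  have hyb' := hyb
  rw [norm_mul] at hxz' hyz' hxb' hyb'
  obtain ⟨r, h1, h2, h3, h4, h5⟩ := exists_rad hxz' hyz' hxb' hyb' hx hy
  have hr0 : 0 < r := (norm_nonneg _).trans_lt h1
  obtain ⟨C1, hC1, hb1⟩ := PP_geom_bound (A := A) (B := 0) hq1 h1 h2
  obtain ⟨C2, hC2, hb2⟩ := qp_ratio_bound hq1
  let f : ℕ × ℕ → ℂ := fun p => qp q q (p.1+p.2) * PP q x y A 0 (p.1+p.2) *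
    (PP q 1 z γ (A*b*z/γ) p.1 * (b^p.2 / qp q q p.2))
  have sP : Summable (fun n => ‖PP q 1 z γ (A*b*z/γ) n * (r:ℂ)^n‖) := by
    apply PP_norm_summable hq1
    · rw [one_mul, Complex.norm_real, Real.norm_of_nonneg hr0.le]; exact h5
    · rw [norm_mul, Complex.norm_real, Real.norm_of_nonneg hr0.le, mul_comm]; exact h3
  have hf : Summable f := by
    have hg := (sP.mul_of_nonneg (summable_geometric_of_lt_one (r := r*‖b‖) (by positivity) h4)
      (fun _ => norm_nonneg _) (fun _ => by positivity)).mul_left (C1*C2)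
    refine Summable.of_norm_bounded hg ?_
    rintro ⟨n, i⟩
    have e : f (n,i) = (qp q q (n+i) / qp q q i) * PP q x y A 0 (n+i) *
      (PP q 1 z γ (A*b*z/γ) n * b^i) := by
      simp only [f]; ring
    rw [e]
    simp only [norm_mul, norm_pow, Complex.norm_real, Real.norm_of_nonneg hr0.le]
    calc _ ≤ C2 * (C1 * r^(n+i)) * (‖PP q 1 z γ (A*b*z/γ) n‖ * ‖b‖^i) := by
          gcongr
          · exact hb2 _ _
          · exact hb1 _
      _ = _ := by rw [pow_add, mul_pow]; ring
  have e1 : Psi q x y A γ z b = qinf q (x*b) * qinf q (y*b) * ∑' p, f p := by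
    rw [hf.tsum_prod, ← tsum_mul_left]
    unfold Psi
    apply tsum_congr; intro n
    have := rho_eval (A := A) hq1 n b hxb hyb
    have e2 : ∑' i, f (n,i) = PP q 1 z γ (A*b*z/γ) n * rho q x y A n b := by
      unfold rho
      rw [← tsum_mul_left]
      apply tsum_congr; intro i
      simp only [f]; ring
    rw [e2]
    linear_combination -PP q 1 z γ (A*b*z/γ) n * this
  rw [e1]
  congr 1
  have e3 := (HasAntidiagonal.sigmaAntidiagonalEquivProd (A := ℕ)).tsum_eq f
  refine e3.symm.trans ?_
  have hs4 := (HasAntidiagonal.sigmaAntidiagonalEquivProd (A := ℕ)).summable_iff.mpr hf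
  refine hs4.tsum_sigma.trans ?_
  apply tsum_congr; intro n
  rw [tsum_fintype, DD_eq_sum, Finset.mul_sum, ← Finset.sum_coe_sort (HasAntidiagonal.antidiagonal n)]
  apply Finset.sum_congr rfl
  rintro ⟨p, hp⟩ _
  simp only [Function.comp, HasAntidiagonal.sigmaAntidiagonalEquivProd_apply, f]
  rw [HasAntidiagonal.mem_antidiagonal.mp hp]

lemma Psi_symm {q x y A γ z b : ℂ} (hq1 : ‖q‖ < 1) (hx : ‖x‖ < 1) (hy : ‖y‖ < 1)
    (hxz : ‖x * z‖ < 1) (hyz : ‖y * z‖ < 1) (hxb : ‖x * b‖ < 1) (hyb : ‖y * b‖ < 1) :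
    qinf q (x*z) * qinf q (y*z) * Psi q x y A γ z b =
      qinf q (x*b) * qinf q (y*b) * Psi q x y A γ b z := by
  rw [Psi_eq hq1 hx hy hxz hyz hxb hyb, Psi_eq hq1 hx hy hxb hyb hxz hyz]
  simp only [DD_symm hq1 A γ z b]
  ring


/-- coefficients `(c)_l (d)_l/((q)_l (e)_l)` -/
noncomputable def uc (q c d e : ℂ) (l : ℕ) : ℂ := qp q c l * qp q d l / (qp q q l * qp q e l)

lemma uc_bound {q e : ℂ} (hq1 : ‖q‖ < 1) (he : ∀ n : ℕ, e * q^n ≠ 1) (R : ℝ) :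
    ∃ C, 0 < C ∧ ∀ c d : ℂ, ‖c‖ ≤ R → ‖d‖ ≤ R → ∀ l, ‖uc q c d e l‖ ≤ C := by
  obtain ⟨C1, hC1, h1⟩ := qp_inv_bound hq1 (q_ne_one hq1)
  obtain ⟨C2, hC2, h2⟩ := qp_inv_bound hq1 he
  refine ⟨Real.exp (R / (1 - ‖q‖)) * Real.exp (R / (1 - ‖q‖)) * (C1 * C2), by positivity, ?_⟩
  intro c d hc hd l
  rw [uc, div_eq_mul_inv, mul_inv, norm_mul, norm_mul, norm_mul]
  gcongr
  · exact qp_bound hq1 hc l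
  · exact qp_bound hq1 hd l
  · exact h1 l
  · exact h2 l

lemma uc_bound' {q e : ℂ} (hq1 : ‖q‖ < 1) (he : ∀ n : ℕ, e * q^n ≠ 1) (c d : ℂ) :
    ∃ C, 0 < C ∧ ∀ l, ‖uc q c d e l‖ ≤ C := by
  obtain ⟨C, hC, h⟩ := uc_bound hq1 he (max ‖c‖ ‖d‖)
  exact ⟨C, hC, h c d (le_max_left _ _) (le_max_right _ _)⟩

lemma uc_succ {q e : ℂ} (hq1 : ‖q‖ < 1) (he : ∀ n : ℕ, e * q^n ≠ 1) (c d : ℂ) (l : ℕ) :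
    uc q c d e (l+1) * ((1 - q^(l+1)) * (1 - e*q^l)) = uc q c d e l * ((1 - c*q^l) * (1 - d*q^l)) := by
  have h1 := one_sub_q_ne hq1 l
  have h2 : 1 - e*q^l ≠ 0 := sub_ne_zero.mpr (he l).symm
  have h3 := qpqq_ne hq1 l
  have h4 := qp_ne_zero he l
  have e4 : qp q q (l+1) = qp q q l * (1 - q^(l+1)) := by rw [qp_succ]; ring
  unfold uc
  have h2' : 1 - q^l*e ≠ 0 := by rwa [mul_comm]
  rw [e4, qp_succ, qp_succ, qp_succ]
  field_simp

lemma qpow_norm_lt {q : ℂ} (hq1 : ‖q‖ < 1) (n : ℕ) : ‖q^(n+1)‖ < 1 := by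
  rw [norm_pow]; exact pow_lt_one₀ (norm_nonneg _) hq1 (by simp)

noncomputable def SS (q c d e : ℂ) (n : ℕ) : ℂ := ∑' l, uc q c d e l * (q^(n+1))^l

lemma SS_summable {q e : ℂ} (hq1 : ‖q‖ < 1) (he : ∀ n : ℕ, e * q^n ≠ 1) (c d : ℂ) (n : ℕ) :
    Summable (fun l => uc q c d e l * (q^(n+1))^l) := by
  obtain ⟨C, hC, h⟩ := uc_bound' hq1 he c d
  refine Summable.of_norm_bounded ((summable_geometric_of_lt_one (norm_nonneg _) (qpow_norm_lt hq1 n)).mul_left C)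
    fun l => ?_
  rw [norm_mul, norm_pow]
  gcongr
  exact h l

lemma SS_cont {q e : ℂ} (hq1 : ‖q‖ < 1) (he : ∀ n : ℕ, e * q^n ≠ 1) (c : ℂ) (n : ℕ) :
    Continuous (fun d => SS q c d e n) := by
  rw [continuous_iff_continuousAt]
  intro d0
  obtain ⟨C, hC, h⟩ := uc_bound hq1 he (max ‖c‖ (‖d0‖+1))
  have hc : ContinuousOn (fun d => SS q c d e n) (Metric.ball 0 (‖d0‖+1)) := by
    refine continuousOn_tsum (u := fun l => C * ‖q^(n+1)‖^l) ?_ ((summable_geometric_of_lt_one (norm_nonneg _) (qpow_norm_lt hq1 n)).mul_left C) ?_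
    · intro l
      apply Continuous.continuousOn
      unfold uc
      have := (qp_diff q l).continuous
      fun_prop
    · intro l d hd
      rw [norm_mul, norm_pow]
      gcongr
      apply h _ _ (le_max_left _ _)
      rw [Metric.mem_ball, dist_zero_right] at hd
      exact hd.le.trans (le_max_right _ _)
  exact hc.continuousAt (Metric.isOpen_ball.mem_nhds (by simp))

/-- telescoping contiguous relation -/
lemma SS_tele {q e : ℂ} (hq1 : ‖q‖ < 1) (he : ∀ n : ℕ, e * q^n ≠ 1) (c d g : ℂ) (hg : g * q = e) :
    (1 + g - c - d) * SS q c d e 0 + (c*d - g) * SS q c d e 1 =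
      qinf q c * qinf q d / (qinf q q * qinf q e) := by
  have s0 := SS_summable hq1 he c d 0
  have s1 := SS_summable hq1 he c d 1
  have hs := (s0.mul_left (1+g-c-d)).add (s1.mul_left (c*d-g))
  have e1 : (1 + g - c - d) * SS q c d e 0 + (c*d - g) * SS q c d e 1 =
    ∑' l, ((1 + g - c - d) * (uc q c d e l * (q^(0+1))^l) + (c*d - g) * (uc q c d e l * (q^(1+1))^l)) := by
    unfold SS
    rw [(s0.mul_left _).tsum_add (s1.mul_left _), tsum_mul_left, tsum_mul_left]
  rw [e1]
  refine tendsto_nhds_unique hs.hasSum.tendsto_sum_nat ?_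
  have hp : ∀ N, ∑ l ∈ Finset.range N, ((1 + g - c - d) * (uc q c d e l * (q^(0+1))^l) + (c*d - g) * (uc q c d e l * (q^(1+1))^l))
      = uc q c d e N * ((1 - q^N) * (1 - g * q^N)) := by
    intro N
    induction N with
    | zero => simp
    | succ N ih =>
      rw [Finset.sum_range_succ, ih]
      have := uc_succ hq1 he c d N
      rw [show g*q^(N+1) = e*q^N by rw [← hg]; ring, this]
      rw [← pow_mul, ← pow_mul]
      ring
  simp only [hp]
  have hq0 := tendsto_pow_atTop_nhds_zero_of_norm_lt_one hq1
  have t1 : Tendsto (uc q c d e) atTop (𝓝 (qinf q c * qinf q d / (qinf q q * qinf q e))) :=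
    ((qp_tendsto hq1 c).mul (qp_tendsto hq1 d)).div ((qp_tendsto hq1 q).mul (qp_tendsto hq1 e))
      (mul_ne_zero (qinf_ne_zero hq1 (q_ne_one hq1)) (qinf_ne_zero hq1 he))
  have := t1.mul ((hq0.const_sub 1).mul ((hq0.const_mul g).const_sub 1))
  simpa using this

lemma SS_shift {q e : ℂ} (hq1 : ‖q‖ < 1) (he : ∀ n : ℕ, e * q^n ≠ 1) (c d : ℂ) (n : ℕ) :
    SS q c d e n - (1 - d) * SS q c (d*q) e n = d * SS q c d e (n+1) := by
  unfold SS
  rw [← tsum_mul_left, ← tsum_mul_left, ← (SS_summable hq1 he c d n).tsum_sub ((SS_summable hq1 he c (d*q) n).mul_left _)]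
  apply tsum_congr; intro l
  have h : (1 - d) * qp q (d*q) l = qp q d l * (1 - d*q^l) := by rw [← qp_succ', qp_succ]
  have h2 : (1 - d) * uc q c (d*q) e l = uc q c d e l * (1 - d*q^l) := by
    unfold uc
    linear_combination qp q c l / (qp q q l * qp q e l) * h
  rw [show (q^(n+1+1))^l = (q^(n+1))^l * q^l by rw [← mul_pow]; ring]
  linear_combination -(q^(n+1))^l * h2

noncomputable def WW (q b c d : ℂ) (n : ℕ) : ℂ :=
  qinf q (b*d) * qinf q (b*c) / qinf q b * SS q c d (q/b) n +
    qinf q c * qinf q d / qinf q (1/b) * (SS q (b*c) (b*d) (b*q) n * b^n)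

section
variable {q b : ℂ} (hq1 : ‖q‖ < 1) (hq : q ≠ 0) (hb0 : b ≠ 0) (hb : ∀ n : ℕ, b * q^n ≠ 1)
  (hb' : ∀ n : ℕ, 1/b * q^n ≠ 1)

include hb in
lemma hbq (n : ℕ) : b * q * q^n ≠ 1 := by
  have := hb (n+1); rwa [pow_succ', ← mul_assoc] at this

include hb' in
lemma hbq' (n : ℕ) : q / b * q^n ≠ 1 := by
  have := hb' (n+1); intro h; apply this; exact Eq.trans (by ring) h

include hq1 hb hb'

lemma WW_shift (c d : ℂ) (n : ℕ) :
    WW q b c d n - (1-d)*(1-b*d) * WW q b c (d*q) n = d * WW q b c d (n+1) := by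
  have h1 := SS_shift hq1 (hbq' hb') c d n
  have h2 := SS_shift hq1 (hbq hb) (b*c) (b*d) n
  have e1 := qinf_step hq1 d
  have e2 := qinf_step hq1 (b*d)
  unfold WW
  rw [show b*(d*q) = b*d*q by ring, pow_succ b n]
  linear_combination qinf q (b*d) * qinf q (b*c) / qinf q b * h1 +
    qinf q c * qinf q d / qinf q (1/b) * b^n * h2
    + (1-d) * qinf q (b*c) / qinf q b * SS q c (d*q) (q/b) n * e2
    + (1-b*d) * qinf q c / qinf q (1/b) * b^n * SS q (b*c) (b*d*q) (b*q) n * e1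

include hb0

lemma WW_tele (c d : ℂ) : (b+1-b*c-b*d) * WW q b c d 0 = (1 - b*c*d) * WW q b c d 1 := by
  have h1 := SS_tele hq1 (hbq' hb') c d (1/b) (by ring)
  have h2 := SS_tele hq1 (hbq hb) (b*c) (b*d) b rfl
  have n1 := qinf_ne_zero hq1 (hbq' hb')
  have n2 := qinf_ne_zero hq1 (hbq hb)
  have n3 := qinf_ne_zero hq1 (q_ne_one hq1)
  have e1 := qinf_step hq1 b
  have e2 := qinf_step hq1 (1/b)
  rw [show 1/b*q = q/b by ring] at e2
  have n4 : (1-b) ≠ 0 := by have := hb 0; simp at this; exact sub_ne_zero.mpr (Ne.symm this)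
  have n5 : (1-1/b) ≠ 0 := by have := hb' 0; simp only [pow_zero, mul_one] at this; exact sub_ne_zero.mpr (Ne.symm this)
  have n6 : b - 1 ≠ 0 := by rw [← neg_sub]; exact neg_ne_zero.mpr n4
  unfold WW
  rw [e1, e2]
  rw [← sub_eq_zero]
  have : ((b+1-b*c-b*d) * (qinf q (b*d) * qinf q (b*c) / ((1-b) * qinf q (b*q)) * SS q c d (q/b) 0 +
    qinf q c * qinf q d / ((1-1/b) * qinf q (q/b)) * (SS q (b*c) (b*d) (b*q) 0 * b^0))
    - (1-b*c*d) * (qinf q (b*d) * qinf q (b*c) / ((1-b) * qinf q (b*q)) * SS q c d (q/b) 1 +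
    qinf q c * qinf q d / ((1-1/b) * qinf q (q/b)) * (SS q (b*c) (b*d) (b*q) 1 * b^1))) =
    qinf q (b*d) * qinf q (b*c) / ((1-b) * qinf q (b*q)) * b * ((1 + 1/b - c - d) * SS q c d (q/b) 0 + (c*d - 1/b) * SS q c d (q/b) 1) +
    qinf q c * qinf q d / ((1-1/b) * qinf q (q/b)) * ((1 + b - b*c - b*d) * SS q (b*c) (b*d) (b*q) 0 + (b*c*(b*d) - b) * SS q (b*c) (b*d) (b*q) 1) := by
    have hbb : b * (1/b) = 1 := by field_simp
    linear_combination (-qinf q (b*d) * qinf q (b*c) / ((1-b) * qinf q (b*q)) * SS q c d (q/b) 0 + qinf q (b*d) * qinf q (b*c) / ((1-b) * qinf q (b*q)) * SS q c d (q/b) 1) * hbb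
  rw [this, h1, h2]
  have e3 : 1 - 1/b = (b-1)/b := by field_simp
  rw [e3]
  have e4 : (1-b) = -(b-1) := by ring
  rw [e4]
  field_simp
  ring

lemma WW_step0 (c d : ℂ) (h1 : d ≠ 1) (h2 : b*d ≠ 1) :
    WW q b c d 0 = (1 - b*c*d) * WW q b c (d*q) 0 := by
  have e1 := WW_tele hq1 hb0 hb hb' c d
  have e2 := WW_shift hq1 hb hb' c d 0
  have n1 : (1-d) ≠ 0 := sub_ne_zero.mpr h1.symm
  have n2 : (1-b*d) ≠ 0 := sub_ne_zero.mpr h2.symm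
  apply mul_left_cancel₀ (mul_ne_zero n1 n2)
  linear_combination (1-b*c*d) * e2 - d * e1

omit hb0 in
lemma WW_cont (c : ℂ) (n : ℕ) : Continuous (fun d => WW q b c d n) := by
  have h1 := SS_cont hq1 (hbq' hb') c n
  have h2 := SS_cont hq1 (hbq hb) (b*c) n
  have h3 := (qinf_diff hq1).continuous
  have h4 : Continuous (fun d => SS q (b*c) (b*d) (b*q) n) := h2.comp (continuous_const.mul continuous_id)
  unfold WW
  fun_prop

include hq

lemma WW_zero_gen (c d : ℂ) (h1 : ∀ n : ℕ, d * q^n ≠ 1) (h2 : ∀ n : ℕ, b * d * q^n ≠ 1) :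
    WW q b c d 0 = qinf q (b*c*d) * WW q b c 0 0 := by
  have hk : ∀ k : ℕ, WW q b c d 0 = qp q (b*c*d) k * WW q b c (d*q^k) 0 := by
    intro k
    induction k with
    | zero => simp [qp_zero]
    | succ k ih =>
      rw [ih, WW_step0 hq1 hb0 hb hb' c (d*q^k) (h1 k) (by rw [← mul_assoc]; exact h2 k), qp_succ]
      rw [show d*q^k*q = d*q^(k+1) by ring]; ring
  have l1 : Tendsto (fun k : ℕ => d * q^k) atTop (𝓝 0) := by
    simpa using (tendsto_pow_atTop_nhds_zero_of_norm_lt_one hq1).const_mul d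
  have l2 := (WW_cont hq1 hb hb' c 0).tendsto 0
  have l3 := (qp_tendsto hq1 (b*c*d)).mul (l2.comp l1)
  exact tendsto_nhds_unique tendsto_const_nhds (l3.congr fun k => (hk k).symm)

lemma WW_zero_all (c d : ℂ) : WW q b c d 0 = qinf q (b*c*d) * WW q b c 0 0 := by
  have hdense : Dense {d : ℂ | (∀ n : ℕ, d * q^n ≠ 1) ∧ ∀ n : ℕ, b * d * q^n ≠ 1} := by
    have hc : (Set.range (fun n : ℕ => (q^n)⁻¹) ∪ Set.range (fun n : ℕ => (b * q^n)⁻¹)).Countable :=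
      (Set.countable_range _).union (Set.countable_range _)
    refine (hc.dense_compl ℝ).mono ?_
    intro d hd
    simp only [Set.mem_compl_iff, Set.mem_union, Set.mem_range, not_or, not_exists] at hd
    refine ⟨fun n h => hd.1 n ?_, fun n h => hd.2 n ?_⟩
    · exact (eq_inv_of_mul_eq_one_left h).symm
    · exact (eq_inv_of_mul_eq_one_left (by rw [← h]; ring)).symm
  have h3 := (qinf_diff hq1).continuous
  have := Continuous.ext_on hdense (WW_cont hq1 hb hb' c 0)
    (g := fun d => qinf q (b*c*d) * WW q b c 0 0) (by fun_prop)
    (fun d hd => WW_zero_gen hq1 hq hb0 hb hb' c d hd.1 hd.2)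
  exact congrFun this d

omit hq1 hq hb0 hb hb' in
lemma WW_symm (c d : ℂ) (n : ℕ) : WW q b c d n = WW q b d c n := by
  have : ∀ c d e, SS q c d e n = SS q d c e n := by
    intro c d e; unfold SS uc; apply tsum_congr; intro l; ring
  unfold WW
  rw [this c d, this (b*c) (b*d)]; ring

lemma WW_zero (c d : ℂ) : WW q b c d 0 = qinf q (b*c*d) := by
  have h : ∀ c, WW q b c 0 0 = WW q b 0 0 0 := by
    intro c
    rw [WW_symm, WW_zero_all hq1 hq hb0 hb hb' 0 c]; simp [qinf_zero]
  have h1 : WW q b 1 0 0 = 1 := by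
    unfold WW
    rw [qinf_one hq1, mul_zero, mul_one, qinf_zero, one_mul, div_self (qinf_ne_zero hq1 hb)]
    unfold SS
    rw [tsum_eq_single 0]
    · simp [uc, qp_zero]
    · intro l hl
      obtain ⟨m, rfl⟩ := Nat.exists_eq_succ_of_ne_zero hl
      simp [uc, qp_succ']
  rw [WW_zero_all hq1 hq hb0 hb hb' c d, h c, ← h 1, h1, mul_one]

lemma WW_eval (c : ℂ) (n : ℕ) : ∀ d : ℂ, d ≠ 0 →
    WW q b c d n = qp q q n * qinf q (b*c*d*q^n) * PP q 1 b (b*c) (b*d) n := by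
  induction n with
  | zero => intro d _; rw [WW_zero hq1 hq hb0 hb hb', qp_zero, PP_zero]; simp
  | succ n ih =>
    intro d hd
    apply mul_left_cancel₀ hd
    rw [← WW_shift hq1 hb hb', ih d hd, ih (d*q) (mul_ne_zero hd hq)]
    have rc := PP_recI hq1 1 b (b*c) d n
    have e3 := qinf_step hq1 (b*c*d*q^n)
    rw [show b*c*d*q^n*q = b*c*d*q^(n+1) by ring] at e3
    have e4 : qp q q (n+1) = qp q q n * (1 - q^(n+1)) := by rw [qp_succ]; ring
    rw [e4, e3, show b*c*(d*q)*q^n = b*c*d*q^(n+1) by ring]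
    simp only [one_mul] at rc
    linear_combination -(qinf q (b*c*d*q^(n+1)) * qp q q n) * rc
end


noncomputable def FF (q x y A B τ : ℂ) (u : ℕ → ℂ) : ℂ :=
  ∑' l, u l * q^l * (qp q (x*τ) l * qp q (y*τ) l * (qinf q (A*τ*q^l) * qinf q (B*τ*q^l)))

lemma PP_SS_summable {q x y A B τ : ℂ} (hq1 : ‖q‖ < 1) (hx : ‖x*τ‖ < 1) (hy : ‖y*τ‖ < 1)
    {u : ℕ → ℂ} {C : ℝ} (hu : ∀ l, ‖u l‖ ≤ C) :
    Summable (fun p : ℕ × ℕ => PP q x y A B p.1 * τ^p.1 * (u p.2 * (q^(p.1+1))^p.2)) := by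
  have hg := (PP_norm_summable (A := A) (B := B) hq1 hx hy).mul_of_nonneg
    ((summable_geometric_of_lt_one (norm_nonneg q) hq1).mul_left C) (fun _ => norm_nonneg _)
    (fun _ => mul_nonneg ((norm_nonneg _).trans (hu 0)) (by positivity))
  refine Summable.of_norm_bounded hg ?_
  rintro ⟨n, l⟩
  rw [norm_mul (PP q x y A B n * τ^n), norm_mul (u l)]
  have hC : 0 ≤ C := (norm_nonneg _).trans (hu 0)
  simp only
  gcongr
  · exact hu l
  · rw [norm_pow, norm_pow]
    gcongr
    exact pow_le_of_le_one (norm_nonneg _) hq1.le (by simp)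

lemma PP_SS_swap {q x y A B τ : ℂ} (hq1 : ‖q‖ < 1) (hx : ‖x*τ‖ < 1) (hy : ‖y*τ‖ < 1)
    {u : ℕ → ℂ} {C : ℝ} (hu : ∀ l, ‖u l‖ ≤ C) :
    qinf q (x*τ) * qinf q (y*τ) * (∑' n, PP q x y A B n * ((∑' l, u l * (q^(n+1))^l) * τ^n)) =
      FF q x y A B τ u := by
  have hs := PP_SS_summable (A := A) (B := B) hq1 hx hy hu
  have e1 : ∑' n, PP q x y A B n * ((∑' l, u l * (q^(n+1))^l) * τ^n) =
      ∑' n, ∑' l, PP q x y A B n * τ^n * (u l * (q^(n+1))^l) := by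
    apply tsum_congr; intro n
    rw [tsum_mul_left]; ring
  have hs' : Summable (Function.uncurry (fun n l => PP q x y A B n * τ^n * (u l * (q^(n+1))^l))) := hs
  rw [e1, ← hs'.tsum_comm, ← tsum_mul_left]
  unfold FF
  apply tsum_congr; intro l
  have e2 : ∑' n, PP q x y A B n * τ^n * (u l * (q^(n+1))^l) =
      u l * q^l * ∑' n, PP q x y A B n * (τ*q^l)^n := by
    rw [← tsum_mul_left]
    apply tsum_congr; intro n
    rw [mul_pow, ← pow_mul, ← pow_mul, add_mul, one_mul, pow_add, mul_comm n l]; ring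
  have hx' := norm_mul_q_lt hq1 hx l
  have hy' := norm_mul_q_lt hq1 hy l
  rw [mul_assoc] at hx' hy'
  have := PP_eval (A := A) (B := B) hq1 hx' hy'
  rw [e2, qinf_split hq1 (x*τ) l, qinf_split hq1 (y*τ) l]
  rw [← mul_assoc x, ← mul_assoc y, ← mul_assoc A, ← mul_assoc B] at this
  linear_combination u l * q^l * qp q (x*τ) l * qp q (y*τ) l * this

/-- left side -/
noncomputable def LL (q x y A γ z b : ℂ) : ℂ :=
  qinf q x * qinf q y * (qinf q (x*z) * qinf q (y*z)) * Psi q x y A γ z b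

/-- right side -/
noncomputable def RS (q x y A γ z b : ℂ) : ℂ :=
  qinf q γ * qinf q (A*z*b/γ) / qinf q b * (qinf q (x*b) * qinf q (y*b)) *
      FF q x y A (x*y*z) 1 (uc q (A*z/γ) (γ/b) (q/b)) +
    qinf q (A*z/γ) * qinf q (γ/b) / qinf q (1/b) * (qinf q x * qinf q y) *
      FF q x y A (x*y*z) b (uc q (A*z*b/γ) γ (b*q))

lemma local_identity {q x y A γ z b : ℂ} (hq1 : ‖q‖ < 1) (hq : q ≠ 0) (hγ : γ ≠ 0) (hb0 : b ≠ 0)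
    (hb : ∀ n : ℕ, b * q^n ≠ 1) (hb' : ∀ n : ℕ, 1/b * q^n ≠ 1) (hx : ‖x‖ < 1) (hy : ‖y‖ < 1)
    (hxz : ‖x * z‖ < 1) (hyz : ‖y * z‖ < 1) (hxb : ‖x * b‖ < 1) (hyb : ‖y * b‖ < 1) :
    LL q x y A γ z b = RS q x y A γ z b := by
  have hsym := Psi_symm (A := A) (γ := γ) hq1 hx hy hxz hyz hxb hyb
  obtain ⟨C1, hC1, hu1⟩ := uc_bound' hq1 (hbq' hb') (A*z/γ) (γ/b)
  obtain ⟨C2, hC2, hu2⟩ := uc_bound' hq1 (hbq hb) (A*z*b/γ) γ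
  have hx1 : ‖x*1‖ < 1 := by rwa [mul_one]
  have hy1 : ‖y*1‖ < 1 := by rwa [mul_one]
  have sw1 := PP_SS_swap (A := A) (B := x*y*z) hq1 hx1 hy1 hu1
  have sw2 := PP_SS_swap (A := A) (B := x*y*z) hq1 hxb hyb hu2
  have s1 := (PP_SS_summable (A := A) (B := x*y*z) hq1 hx1 hy1 hu1).prod
  have s2 := (PP_SS_summable (A := A) (B := x*y*z) hq1 hxb hyb hu2).prod
  have t1 : Summable (fun n => PP q x y A (x*y*z) n * (SS q (A*z/γ) (γ/b) (q/b) n * 1^n)) := by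
    refine s1.congr fun n => ?_
    dsimp only; rw [tsum_mul_left]; unfold SS; ring
  have t2 : Summable (fun n => PP q x y A (x*y*z) n * (SS q (A*z*b/γ) γ (b*q) n * b^n)) := by
    refine s2.congr fun n => ?_
    dsimp only; rw [tsum_mul_left]; unfold SS; ring
  have hPsi : Psi q x y A γ b z =
      qinf q γ * qinf q (A*z*b/γ) / qinf q b * (∑' n, PP q x y A (x*y*z) n * (SS q (A*z/γ) (γ/b) (q/b) n * 1^n))
      + qinf q (A*z/γ) * qinf q (γ/b) / qinf q (1/b) * (∑' n, PP q x y A (x*y*z) n * (SS q (A*z*b/γ) γ (b*q) n * b^n)) := by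
    rw [← tsum_mul_left, ← tsum_mul_left, ← (t1.mul_left _).tsum_add (t2.mul_left _)]
    unfold Psi
    apply tsum_congr; intro n
    have hW := WW_eval hq1 hq hb0 hb hb' (A*z/γ) n (γ/b) (div_ne_zero hγ hb0)
    unfold WW at hW
    have e1 : b*(γ/b) = γ := by field_simp
    have e2 : b*(A*z/γ) = A*z*b/γ := by ring
    have e3 : b*(A*z/γ)*(γ/b) = A*z := by field_simp
    rw [e3, e1, e2] at hW
    have e4 : PP q 1 b (A*z*b/γ) γ n = PP q 1 b γ (A*z*b/γ) n := by unfold PP; rw [GG_swap hq1]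
    rw [e4] at hW
    rw [one_pow]
    linear_combination -PP q x y A (x*y*z) n * hW
  unfold LL RS
  unfold SS at hPsi
  rw [mul_one, mul_one] at sw1
  rw [mul_assoc, hsym, hPsi, ← sw1, ← sw2]
  ring

lemma PP_s_diff (q x y A B : ℂ) (n : ℕ) :
    Differentiable ℂ (fun s : ℂ => PP q (s*x) (s*y) A (s*x*(s*y)*B) n) := by
  simp only [PP_eq_sum, bcf]
  fun_prop

lemma FF_s_diff {q x y A B τ : ℂ} (hq1 : ‖q‖ < 1) {u : ℕ → ℂ} {C : ℝ} (hu : ∀ l, ‖u l‖ ≤ C) (R : ℝ) :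
    DifferentiableOn ℂ (fun s : ℂ => FF q (s*x) (s*y) A (s*x*(s*y)*B) τ u) (Metric.ball 0 R) := by
  have hqi := qinf_diff hq1
  have hC : 0 ≤ C := (norm_nonneg _).trans (hu 0)
  let E : ℝ → ℝ := fun t => Real.exp (t / (1 - ‖q‖))
  let M : ℝ := E (R*‖x‖*‖τ‖) * E (R*‖y‖*‖τ‖) * (E (‖A‖*‖τ‖) * E (R*‖x‖*(R*‖y‖)*‖B‖*‖τ‖))
  refine Complex.differentiableOn_tsum_of_summable_norm (u := fun l => C * ‖q‖^l * M) ?_ ?_ Metric.isOpen_ball ?_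
  · exact ((summable_geometric_of_lt_one (norm_nonneg q) hq1).mul_left C).mul_right M
  · intro l
    apply Differentiable.differentiableOn
    have := qp_diff q l
    have h1 : Differentiable ℂ (fun s : ℂ => qp q (s*x*τ) l) := this.comp (by fun_prop)
    have h2 : Differentiable ℂ (fun s : ℂ => qp q (s*y*τ) l) := this.comp (by fun_prop)
    have h3 : Differentiable ℂ (fun s : ℂ => qinf q (s*x*(s*y)*B*τ*q^l)) := hqi.comp (by fun_prop)
    fun_prop
  · intro l s hs
    rw [Metric.mem_ball, dist_zero_right] at hs
    have hR : 0 ≤ R := (norm_nonneg _).trans hs.le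
    have hql : ‖q‖^l ≤ 1 := pow_le_one₀ (norm_nonneg _) hq1.le
    have b1 : ‖qp q (s*x*τ) l‖ ≤ E (R*‖x‖*‖τ‖) := by
      apply qp_bound hq1; simp only [norm_mul]; gcongr
    have b2 : ‖qp q (s*y*τ) l‖ ≤ E (R*‖y‖*‖τ‖) := by
      apply qp_bound hq1; simp only [norm_mul]; gcongr
    have b3 : ‖qinf q (A*τ*q^l)‖ ≤ E (‖A‖*‖τ‖) := by
      apply qinf_bound hq1; simp only [norm_mul, norm_pow]
      exact mul_le_of_le_one_right (by positivity) hql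
    have b4 : ‖qinf q (s*x*(s*y)*B*τ*q^l)‖ ≤ E (R*‖x‖*(R*‖y‖)*‖B‖*‖τ‖) := by
      apply qinf_bound hq1; simp only [norm_mul, norm_pow]
      refine (mul_le_of_le_one_right (by positivity) hql).trans ?_
      gcongr
    have hE : ∀ t, 0 ≤ E t := fun t => Real.exp_nonneg _
    rw [norm_mul, norm_mul, norm_mul, norm_mul, norm_mul, norm_pow]
    exact mul_le_mul (mul_le_mul_of_nonneg_right (hu l) (by positivity))
      (mul_le_mul (mul_le_mul b1 b2 (norm_nonneg _) (hE _))
        (mul_le_mul b3 b4 (norm_nonneg _) (hE _)) (by positivity) (mul_nonneg (hE _) (hE _)))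
      (by positivity) (by positivity)

lemma Psi_s_diff {q x y A γ z b : ℂ} (hq1 : ‖q‖ < 1) (hx : ‖x‖ < 1) (hy : ‖y‖ < 1)
    (hxz : ‖x * z‖ < 1) (hyz : ‖y * z‖ < 1) : ∃ R : ℝ, 1 < R ∧
    DifferentiableOn ℂ (fun s : ℂ => Psi q (s*x) (s*y) A γ z b) (Metric.ball 0 R) := by
  rw [norm_mul] at hxz hyz
  obtain ⟨r, h1, h2, h3, -, h5⟩ := exists_rad hxz hyz (v := 0) (by simp) (by simp) hx hy
  have hr0 : 0 < r := (norm_nonneg _).trans_lt h1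
  obtain ⟨r', hr1, hr2⟩ := exists_between (max_lt h1 h2)
  have hr'0 : 0 < r' := (norm_nonneg _).trans_lt ((le_max_left _ _).trans_lt hr1)
  have hlt : ∀ a : ℝ, a < r' → r/r' * a < r := by
    intro a ha
    rw [div_mul_eq_mul_div, div_lt_iff₀ hr'0]
    exact mul_lt_mul_of_pos_left ha hr0
  refine ⟨r/r', (one_lt_div hr'0).mpr hr2, ?_⟩
  set R := r/r' with hR
  have hR0 : 0 ≤ R := by positivity
  have hpm := pm_summable (Q := ‖q‖) (x := R*‖x‖) (y := R*‖y‖) (A := ‖A‖) (B := R*‖x‖*(R*‖y‖)*‖b‖) (r := r⁻¹)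
    (norm_nonneg _) hq1 (by positivity) (by positivity) (norm_nonneg _) (by positivity)
    (inv_nonneg.mpr hr0.le)
    (by rw [← div_eq_mul_inv, div_lt_one hr0]; exact hlt _ ((le_max_left _ _).trans_lt hr1))
    (by rw [← div_eq_mul_inv, div_lt_one hr0]; exact hlt _ ((le_max_right _ _).trans_lt hr1))
  obtain ⟨C, hC, hb1⟩ := exists_bound hpm (inv_pos.mpr hr0)
  rw [inv_inv] at hb1
  have sP : Summable (fun n => ‖PP q 1 z γ (A*b*z/γ) n * (r:ℂ)^n‖) := by
    apply PP_norm_summable hq1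
    · rw [one_mul, Complex.norm_real, Real.norm_of_nonneg hr0.le]; exact h5
    · rw [norm_mul, Complex.norm_real, Real.norm_of_nonneg hr0.le, mul_comm]; exact h3
  let E : ℝ → ℝ := fun t => Real.exp (t / (1 - ‖q‖))
  refine Complex.differentiableOn_tsum_of_summable_norm
    (u := fun n => E ‖q‖ * E ‖A*b‖ * C * ‖PP q 1 z γ (A*b*z/γ) n * (r:ℂ)^n‖) (sP.mul_left _) ?_
    Metric.isOpen_ball ?_
  · intro n
    apply Differentiable.differentiableOn
    have := PP_s_diff q x y A b n
    fun_prop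
  · intro n s hs
    rw [Metric.mem_ball, dist_zero_right] at hs
    have hP : ‖PP q (s*x) (s*y) A (s*x*(s*y)*b) n‖ ≤ C * r^n := by
      refine (norm_PP_le hq1 ?_ ?_ le_rfl ?_ n).trans (hb1 n)
      · rw [norm_mul]; gcongr
      · rw [norm_mul]; gcongr
      · simp only [norm_mul]; gcongr
    have hA : ‖qinf q (A*b*q^n)‖ ≤ E ‖A*b‖ := by
      apply qinf_bound hq1
      rw [norm_mul, norm_pow]
      exact mul_le_of_le_one_right (norm_nonneg _) (pow_le_one₀ (norm_nonneg _) hq1.le)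
    have hQ : ‖qp q q n‖ ≤ E ‖q‖ := qp_bound hq1 le_rfl n
    rw [norm_mul, norm_mul, norm_mul]
    have e : ‖PP q 1 z γ (A*b*z/γ) n * (r:ℂ)^n‖ = ‖PP q 1 z γ (A*b*z/γ) n‖ * r^n := by
      rw [norm_mul, norm_pow, Complex.norm_real, Real.norm_of_nonneg hr0.le]
    rw [e]
    calc _ ≤ E ‖q‖ * E ‖A*b‖ * (C * r^n) * ‖PP q 1 z γ (A*b*z/γ) n‖ := by gcongr
      _ = _ := by ring

lemma global_identity {q x y A γ z b : ℂ} (hq1 : ‖q‖ < 1) (hq : q ≠ 0) (hγ : γ ≠ 0) (hb0 : b ≠ 0)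
    (hb : ∀ n : ℕ, b * q^n ≠ 1) (hb' : ∀ n : ℕ, 1/b * q^n ≠ 1) (hx : ‖x‖ < 1) (hy : ‖y‖ < 1)
    (hxz : ‖x * z‖ < 1) (hyz : ‖y * z‖ < 1) :
    LL q x y A γ z b = RS q x y A γ z b := by
  obtain ⟨R, hR, hd⟩ := Psi_s_diff (A := A) (γ := γ) (b := b) hq1 hx hy hxz hyz
  obtain ⟨C1, hC1, hu1⟩ := uc_bound' hq1 (hbq' hb') (A*z/γ) (γ/b)
  obtain ⟨C2, hC2, hu2⟩ := uc_bound' hq1 (hbq hb) (A*z*b/γ) γ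
  have f1 := FF_s_diff (x := x) (y := y) (A := A) (B := z) (τ := 1) hq1 hu1 R
  have f2 := FF_s_diff (x := x) (y := y) (A := A) (B := z) (τ := b) hq1 hu2 R
  have hqi : ∀ w : ℂ, Differentiable ℂ (fun s : ℂ => qinf q (s*w)) := fun w =>
    (qinf_diff hq1).comp (by fun_prop)
  have hqi2 : ∀ w v : ℂ, Differentiable ℂ (fun s : ℂ => qinf q (s*w*v)) := fun w v =>
    (qinf_diff hq1).comp (by fun_prop)
  have d1 : DifferentiableOn ℂ (fun s : ℂ => LL q (s*x) (s*y) A γ z b) (Metric.ball 0 R) := by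
    unfold LL
    exact ((((hqi x).mul (hqi y)).mul ((hqi2 x z).mul (hqi2 y z))).differentiableOn).mul hd
  have d2 : DifferentiableOn ℂ (fun s : ℂ => RS q (s*x) (s*y) A γ z b) (Metric.ball 0 R) := by
    unfold RS
    exact ((((hqi2 x b).mul (hqi2 y b)).const_mul _).differentiableOn.mul f1).add
      ((((hqi x).mul (hqi y)).const_mul _).differentiableOn.mul f2)
  have hev : (fun s : ℂ => LL q (s*x) (s*y) A γ z b) =ᶠ[𝓝 0] (fun s : ℂ => RS q (s*x) (s*y) A γ z b) := by
    have hsm : ∀ w v : ℂ, ∀ᶠ s : ℂ in 𝓝 0, ‖s*w*v‖ < 1 := by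
      intro w v
      have : Tendsto (fun s : ℂ => ‖s*w*v‖) (𝓝 0) (𝓝 ‖(0:ℂ)*w*v‖) :=
        Continuous.tendsto (by fun_prop) 0
      exact this.eventually_lt_const (by simp)
    filter_upwards [hsm x 1, hsm y 1, hsm x z, hsm y z, hsm x b, hsm y b] with s a1 a2 a3 a4 a5 a6
    rw [mul_one] at a1 a2
    exact local_identity hq1 hq hγ hb0 hb hb' a1 a2 a3 a4 a5 a6
  have := (d1.analyticOnNhd Metric.isOpen_ball).eqOn_of_preconnected_of_eventuallyEq
    (d2.analyticOnNhd Metric.isOpen_ball) (convex_ball (0:ℂ) R).isPreconnected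
    (Metric.mem_ball_self (by linarith)) hev
  have h1 := this (x := 1) (by simpa using hR)
  simpa using h1


lemma FF_phi {q x y A B τ c d e : ℂ} (hq1 : ‖q‖ < 1) (hA : ∀ n : ℕ, A*τ*q^n ≠ 1)
    (hB : ∀ n : ℕ, B*τ*q^n ≠ 1) :
    FF q x y A B τ (uc q c d e) =
      qinf q (A*τ) * qinf q (B*τ) * Phi43 q (x*τ) (y*τ) c d (A*τ) (B*τ) e q := by
  unfold FF Phi43
  rw [← tsum_mul_left]
  apply tsum_congr; intro l
  simp only [qpoch_nat, uc]
  rw [qinf_split hq1 (A*τ) l, qinf_split hq1 (B*τ) l]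
  have h1 := qp_ne_zero hA l
  have h2 := qp_ne_zero hB l
  have e1 : qp q (A*τ) l * (qp q (A*τ) l)⁻¹ = 1 := mul_inv_cancel₀ h1
  have e2 : qp q (B*τ) l * (qp q (B*τ) l)⁻¹ = 1 := mul_inv_cancel₀ h2
  simp only [div_eq_mul_inv, mul_inv]
  linear_combination (-(qp q c l * qp q d l * (qp q q l)⁻¹ * (qp q e l)⁻¹ * q^l * qp q (x*τ) l * qp q (y*τ) l
    * qinf q (A*τ*q^l) * qinf q (B*τ*q^l))) * (qp q (B*τ) l * (qp q (B*τ) l)⁻¹) * e1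
    - (qp q c l * qp q d l * (qp q q l)⁻¹ * (qp q e l)⁻¹ * q^l * qp q (x*τ) l * qp q (y*τ) l
    * qinf q (A*τ*q^l) * qinf q (B*τ*q^l)) * e2

lemma Phi_perm34 (q a1 a2 a3 a4 b1 b2 b3 u : ℂ) :
    Phi43 q a1 a2 a3 a4 b1 b2 b3 u = Phi43 q a1 a2 a4 a3 b1 b2 b3 u := by
  unfold Phi43; apply tsum_congr; intro l; ring

lemma Phi_perm (q a1 a2 a3 a4 b1 b2 b3 u : ℂ) :
    Phi43 q a1 a4 a3 a2 b1 b2 b3 u = Phi43 q a1 a2 a3 a4 b1 b2 b3 u := by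
  unfold Phi43; apply tsum_congr; intro l; ring

theorem ggr_q_analogue_two_4phi3 (q α β γ x y z : ℂ)
    (hq0 : 0 < ‖q‖) (hq1 : ‖q‖ < 1)
    (hβ : β ≠ 0) (hγ : γ ≠ 0) (hx : x ≠ 0)
    (hlt1 : max (max ‖x‖ ‖y‖) ‖α * β / γ‖ < 1)
    (hlt2 : max (max ‖x‖ ‖y‖) ‖α * β / γ‖ * ‖z‖ < 1)
    (hαβ : ∀ n : ℕ, 1 ≤ n → α * β ≠ q ^ n)
    (hγq : ∀ n : ℕ, 1 ≤ n → γ ≠ q ^ n)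
    (hgen : ∀ u ∈ [x, y, x / β, β / x, x * z, y * z, α * β * z / γ, α * β,
        β * y * z, q * β / x, α * x, x * y * z, q * x / β],
      ∀ n : ℕ, u ≠ q ^ (-(n : ℤ))) :
    Summable (fun p : ℕ × ℕ × ℕ => ‖qGGRTerm q α β γ x y z p‖) ∧
    (∑' p : ℕ × ℕ × ℕ, qGGRTerm q α β γ x y z p) =
      qinf q (γ * x / β) * qinf q (q * z / γ) * qinf q (α * x * z / γ) * qinf q (β * y * z) /
          (qinf q (x / β) * qinf q (α * β * z / γ) * qinf q (x * z) * qinf q (y * z)) *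
          Phi43 q β γ (α * β * z / γ) (β * y / x) (α * β) (β * y * z) (q * β / x) q +
        qinf q (q * z / γ) * qinf q β * qinf q γ * qinf q (β * y / x) * qinf q (α * x) *
            qinf q (x * y * z) /
          (qinf q x * qinf q y * qinf q (x * z) * qinf q (y * z) * qinf q (α * β) *
            qinf q (β / x)) *
          Phi43 q x y (γ * x / β) (α * x * z / γ) (α * x) (x * y * z) (q * x / β) q := by
  have hq : q ≠ 0 := norm_pos_iff.mp hq0
  have hne : ∀ u ∈ [x, y, x / β, β / x, x * z, y * z, α * β * z / γ, α * β,
        β * y * z, q * β / x, α * x, x * y * z, q * x / β], ∀ n : ℕ, u * q^n ≠ 1 := by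
    intro u hu n h
    apply hgen u hu n
    rw [zpow_neg, zpow_natCast]
    exact eq_inv_of_mul_eq_one_left h
  have nx := hne x (by simp)
  have ny := hne y (by simp)
  have nxβ := hne (x/β) (by simp)
  have nβx := hne (β/x) (by simp)
  have nxz := hne (x*z) (by simp)
  have nyz := hne (y*z) (by simp)
  have nδz := hne (α*β*z/γ) (by simp)
  have nP := hne (α*β) (by simp)
  have nβyz := hne (β*y*z) (by simp)
  have nαx := hne (α*x) (by simp)
  have nxyz := hne (x*y*z) (by simp)
  have hγ' : ∀ n : ℕ, γ ≠ q^(n+1) := fun n => hγq (n+1) (by omega)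
  have hP : ∀ n : ℕ, α*β ≠ q^(n+1) := fun n => hαβ (n+1) (by omega)
  have hs := triple_summable hq1 hq hγ hγ' hP nP hlt1 hlt2
  refine ⟨hs, ?_⟩
  have hM : ∀ a : ℝ, a ≤ max (max ‖x‖ ‖y‖) ‖α * β / γ‖ → a < 1 ∧ a * ‖z‖ < 1 := fun a ha =>
    ⟨ha.trans_lt hlt1, (mul_le_mul_of_nonneg_right ha (norm_nonneg _)).trans_lt hlt2⟩
  obtain ⟨hx1, hxz⟩ := hM ‖x‖ ((le_max_left _ _).trans (le_max_left _ _))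
  obtain ⟨hy1, hyz⟩ := hM ‖y‖ ((le_max_right _ _).trans (le_max_left _ _))
  rw [← norm_mul] at hxz hyz
  have e0 := triple_eq_Psi (A := α*x) (b := β/x) hq1 hq hγ hγ' hP nP hlt1 hlt2 rfl (by field_simp)
  have hb0 : β/x ≠ 0 := div_ne_zero hβ hx
  have hb' : ∀ n : ℕ, 1/(β/x) * q^n ≠ 1 := by
    intro n; rw [one_div_div]; exact nxβ n
  have e1 := global_identity (A := α*x) hq1 hq hγ hb0 nβx hb' hx1 hy1 hxz hyz
  unfold LL RS at e1
  rw [FF_phi hq1 (by intro n; rw [mul_one]; exact nαx n) (by intro n; rw [mul_one]; exact nxyz n),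
    FF_phi hq1 (by intro n; rw [show α*x*(β/x) = α*β by field_simp]; exact nP n)
      (by intro n; rw [show x*y*z*(β/x) = β*y*z by field_simp]; exact nβyz n)] at e1
  rw [show α*x*(β/x) = α*β by field_simp, show x*y*z*(β/x) = β*y*z by field_simp,
    show α*x*z*(β/x)/γ = α*β*z/γ by field_simp, show x*(β/x) = β by field_simp,
    show y*(β/x) = β*y/x by ring, show γ/(β/x) = γ*x/β by field_simp,
    show q/(β/x) = q*x/β by field_simp, show β/x*q = q*β/x by ring, one_div_div] at e1
  simp only [mul_one] at e1
  rw [Phi_perm34 q x y, Phi_perm q β γ] at e1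
  rw [show α*β/γ*z = α*β*z/γ by ring] at e0
  have i1 := qinf_ne_zero hq1 nx
  have i2 := qinf_ne_zero hq1 ny
  have i3 := qinf_ne_zero hq1 nxβ
  have i4 := qinf_ne_zero hq1 nβx
  have i5 := qinf_ne_zero hq1 nxz
  have i6 := qinf_ne_zero hq1 nyz
  have i7 := qinf_ne_zero hq1 nδz
  have i8 := qinf_ne_zero hq1 nP
  generalize hS : (∑' p : ℕ × ℕ × ℕ, qGGRTerm q α β γ x y z p) = S at e0 ⊢
  generalize Psi q x y (α*x) γ z (β/x) = Ψ at e0 e1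
  generalize Phi43 q x y (γ * x / β) (α * x * z / γ) (α * x) (x * y * z) (q * x / β) q = Φ2 at e1 ⊢
  generalize Phi43 q β γ (α * β * z / γ) (β * y / x) (α * β) (β * y * z) (q * β / x) q = Φ1 at e1 ⊢
  generalize qinf q x = c1 at *
  generalize qinf q y = c2 at *
  generalize qinf q (x/β) = c3 at *
  generalize qinf q (β/x) = c4 at *
  generalize qinf q (x*z) = c5 at *
  generalize qinf q (y*z) = c6 at *
  generalize qinf q (α*β*z/γ) = c7 at *
  generalize qinf q (α*β) = c8 at *
  have hD : c1*c2*(c5*c6)*(c7*c8) ≠ 0 := by simp [*]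
  apply mul_left_cancel₀ hD
  have e2 : c1*c2*(c5*c6)*(c7*c8)*S = qinf q (q*z/γ) * (c1*c2*(c5*c6)*Ψ) := by
    linear_combination c1*c2*(c5*c6)*e0
  rw [e2, e1]
  field_simp
  ring
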